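/- arXiv:math/0308007 — 2 statements merged into one kernel-verified Lean document; each statement's English description precedes it below -/
import Mathlib

section
/- Let (Ω_k, 𝒜_k, μ_k) and (Ω_k, 𝒜_k, ν_k) be probability spaces on finite sets Ω_k with μ_k(i) = p_{ik} ≥ 0 and ν_k(i) = q_{ik} > 0, and let μ = ⊗_k μ_k, ν = ⊗_k ν_k be the infinite product measures on Ω = ∏_k Ω_k. Then μ is absolutely continuous with respect to ν if and only if ∏_{k=1}^∞ (∑_{i ∈ Ω_k} √(p_{ik} q_{ik})) > 0, and μ ⊥ ν if and only if this product equals 0. -/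
open MeasureTheory Filter Finset Topology

/-!
The Hellinger affinity `∫ √(dμ/dν) dν` is multiplicative on products and at most `1` for
probability measures. If the finite products of affinities come arbitrarily close to `0`, then
so does the affinity of the finite-dimensional marginals, and thresholding their density at `1`
gives cylinders which are almost `ν`-null and almost `μ`-full: `μ ⟂ₘ ν`.

Otherwise all finite products outside some finite set `s` of coordinates exceed a given `a < 1`.
Let `ρ` agree with `μ` on `s` and with `ν` elsewhere; then `ρ ≪ ν`. The affinity of every
finite-dimensional marginal of `μ` and `ρ` is at least `a`, which forces `μ ≤ 2 ρ + 4 (1 - a)`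
on cylinders and hence, by density, on all measurable sets. A `ν`-null set is `ρ`-null for every
`s`, so letting `a → 1` shows that it is `μ`-null.
-/

open ProbabilityTheory
open scoped ENNReal NNReal symmDiff

section Affinity

variable {α : Type*} [MeasurableSpace α] {μ ν : Measure α}

/-- The Hellinger affinity `∫ √(dμ/dν) dν` of two measures, the similarity whose products decide
Kakutani's dichotomy. It is `ℝ≥0∞`-valued, and the part of `μ` singular to `ν` does not contribute;
as `rnDeriv` is `0` without a Lebesgue decomposition, so is the affinity. -/
noncomputable def hellingerAffinity (μ ν : Measure α) : ℝ≥0∞ :=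
  ∫⁻ x, μ.rnDeriv ν x ^ (1 / 2 : ℝ) ∂ν

lemma hellingerAffinity_withDensity [SigmaFinite ν] {f : α → ℝ≥0∞} (hf : Measurable f) :
    hellingerAffinity (ν.withDensity f) ν = ∫⁻ x, f x ^ (1 / 2 : ℝ) ∂ν :=
  lintegral_congr_ae ((Measure.rnDeriv_withDensity ν hf).fun_comp (· ^ (1 / 2 : ℝ)))

lemma hellingerAffinity_self [SigmaFinite μ] : hellingerAffinity μ μ = μ Set.univ := by
  calc ∫⁻ x, μ.rnDeriv μ x ^ (1 / 2 : ℝ) ∂μ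
      = ∫⁻ _, 1 ^ (1 / 2 : ℝ) ∂μ :=
        lintegral_congr_ae (μ.rnDeriv_self.fun_comp (· ^ (1 / 2 : ℝ)))
    _ = μ Set.univ := by simp

lemma hellingerAffinity_le_sqrt_mul_sqrt :
    hellingerAffinity μ ν ≤ μ Set.univ ^ (1 / 2 : ℝ) * ν Set.univ ^ (1 / 2 : ℝ) :=
  calc ∫⁻ x, μ.rnDeriv ν x ^ (1 / 2 : ℝ) ∂ν
      = ∫⁻ x, μ.rnDeriv ν x ^ (1 / 2 : ℝ) * 1 ^ (1 / 2 : ℝ) ∂ν := by simp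
    _ ≤ (∫⁻ x, μ.rnDeriv ν x ∂ν) ^ (1 / 2 : ℝ) * (∫⁻ _, 1 ∂ν) ^ (1 / 2 : ℝ) :=
        ENNReal.lintegral_mul_norm_pow_le (Measure.measurable_rnDeriv μ ν).aemeasurable
          aemeasurable_const (by norm_num) (by norm_num) (by norm_num)
    _ ≤ μ Set.univ ^ (1 / 2 : ℝ) * ν Set.univ ^ (1 / 2 : ℝ) := by
        rw [lintegral_one]
        gcongr
        exact Measure.lintegral_rnDeriv_le

lemma hellingerAffinity_le_one [IsProbabilityMeasure μ] [IsProbabilityMeasure ν] :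
    hellingerAffinity μ ν ≤ 1 := by
  simpa using hellingerAffinity_le_sqrt_mul_sqrt (μ := μ) (ν := ν)

lemma exists_measure_le_hellingerAffinity [μ.HaveLebesgueDecomposition ν] (h : μ ≪ ν) :
    ∃ A, MeasurableSet A ∧ ν A ≤ hellingerAffinity μ ν ∧ μ Aᶜ ≤ hellingerAffinity μ ν := by
  have hf : Measurable (μ.rnDeriv ν) := Measure.measurable_rnDeriv μ ν
  have hA : MeasurableSet {x | 1 ≤ μ.rnDeriv ν x} := measurableSet_le measurable_const hf
  refine ⟨_, hA, ?_, ?_⟩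
  · calc ν {x | 1 ≤ μ.rnDeriv ν x}
        ≤ ν {x | 1 ≤ μ.rnDeriv ν x ^ (1 / 2 : ℝ)} :=
          measure_mono fun x hx ↦ ENNReal.one_le_rpow hx (by norm_num)
      _ ≤ hellingerAffinity μ ν := by
          simpa [hellingerAffinity] using
            mul_meas_ge_le_lintegral (μ := ν) (hf.pow_const (1 / 2 : ℝ)) 1
  · calc μ {x | 1 ≤ μ.rnDeriv ν x}ᶜ
        = ∫⁻ x in {x | 1 ≤ μ.rnDeriv ν x}ᶜ, μ.rnDeriv ν x ∂ν := by
          rw [← withDensity_apply _ hA.compl, Measure.withDensity_rnDeriv_eq μ ν h]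
      _ ≤ ∫⁻ x in {x | 1 ≤ μ.rnDeriv ν x}ᶜ, μ.rnDeriv ν x ^ (1 / 2 : ℝ) ∂ν :=
          setLIntegral_mono' hA.compl fun x hx ↦ by
            have hx1 : μ.rnDeriv ν x ≤ 1 := le_of_not_ge hx
            simpa only [ENNReal.rpow_one] using
              ENNReal.rpow_le_rpow_of_exponent_ge hx1 (by norm_num : (1 / 2 : ℝ) ≤ 1)
      _ ≤ hellingerAffinity μ ν := setLIntegral_le_lintegral _ _

lemma two_mul_mul_rpow_half_le_sq_add (a b : ℝ≥0∞) : 2 * b * a ^ (1 / 2 : ℝ) ≤ b ^ 2 + a := by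
  obtain ⟨r, rfl⟩ : ∃ r : ℝ≥0∞, a = r ^ 2 :=
    ⟨a ^ (1 / 2 : ℝ), by rw [← ENNReal.rpow_mul_natCast]; norm_num⟩
  rw [← ENNReal.rpow_natCast_mul, Nat.cast_two, mul_one_div_cancel two_ne_zero, ENNReal.rpow_one]
  induction r with
  | top => simp
  | coe r =>
    induction b with
    | top => simp
    | coe b => exact_mod_cast two_mul_le_add_sq b r

lemma measure_add_four_mul_hellingerAffinity_le [μ.HaveLebesgueDecomposition ν] (h : μ ≪ ν)
    {A : Set α} (hA : MeasurableSet A) :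
    μ A + 4 * hellingerAffinity μ ν ≤ 2 * ν A + 2 * (μ Set.univ + ν Set.univ) := by
  have hf : Measurable (μ.rnDeriv ν) := Measure.measurable_rnDeriv μ ν
  have hμ (B : Set α) (hB : MeasurableSet B) : ∫⁻ x in B, μ.rnDeriv ν x ∂ν = μ B := by
    rw [← withDensity_apply _ hB, Measure.withDensity_rnDeriv_eq μ ν h]
  calc μ A + 4 * hellingerAffinity μ ν
      = ∫⁻ x in A, (μ.rnDeriv ν x + 4 * μ.rnDeriv ν x ^ (1 / 2 : ℝ)) ∂ν
          + ∫⁻ x in Aᶜ, 4 * μ.rnDeriv ν x ^ (1 / 2 : ℝ) ∂ν := by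
        rw [hellingerAffinity, ← lintegral_add_compl _ hA, lintegral_add_left hf, hμ A hA,
          lintegral_const_mul _ (by fun_prop), lintegral_const_mul _ (by fun_prop), mul_add,
          add_assoc]
    -- With `r = √f`: `f + 4 r ≤ 4 + 2 f` as `(r - 2)² ≥ 0`, and `4 r ≤ 2 + 2 f` as `(r - 1)² ≥ 0`.
    _ ≤ ∫⁻ x in A, (4 + 2 * μ.rnDeriv ν x) ∂ν + ∫⁻ x in Aᶜ, (2 + 2 * μ.rnDeriv ν x) ∂ν := by
        refine add_le_add (lintegral_mono fun x ↦ ?_) (lintegral_mono fun x ↦ ?_)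
        · calc μ.rnDeriv ν x + 4 * μ.rnDeriv ν x ^ (1 / 2 : ℝ)
              = μ.rnDeriv ν x + 2 * 2 * μ.rnDeriv ν x ^ (1 / 2 : ℝ) := by ring
            _ ≤ μ.rnDeriv ν x + (2 ^ 2 + μ.rnDeriv ν x) := by
                gcongr
                exact two_mul_mul_rpow_half_le_sq_add _ _
            _ = 4 + 2 * μ.rnDeriv ν x := by ring
        · calc 4 * μ.rnDeriv ν x ^ (1 / 2 : ℝ)
              = 2 * (2 * 1 * μ.rnDeriv ν x ^ (1 / 2 : ℝ)) := by ring
            _ ≤ 2 * (1 ^ 2 + μ.rnDeriv ν x) := by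
                gcongr
                exact two_mul_mul_rpow_half_le_sq_add _ _
            _ = 2 + 2 * μ.rnDeriv ν x := by ring
    _ = 2 * ν A + 2 * (μ Set.univ + ν Set.univ) := by
        rw [lintegral_add_left measurable_const, lintegral_add_left measurable_const,
          lintegral_const_mul _ hf, lintegral_const_mul _ hf, hμ A hA, hμ Aᶜ hA.compl,
          setLIntegral_const, setLIntegral_const, ← measure_add_measure_compl hA,
          ← measure_add_measure_compl (μ := ν) hA]
        ring

lemma hellingerAffinity_eq_sum [Fintype α] [MeasurableSingletonClass α]
    [μ.HaveLebesgueDecomposition ν] (h : μ ≪ ν) :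
    hellingerAffinity μ ν = ∑ x, (μ {x} * ν {x}) ^ (1 / 2 : ℝ) := by
  have hμ (x : α) : μ {x} = μ.rnDeriv ν x * ν {x} := by
    rw [← lintegral_singleton, ← withDensity_apply _ (measurableSet_singleton x),
      Measure.withDensity_rnDeriv_eq μ ν h]
  rw [hellingerAffinity, lintegral_fintype]
  refine Finset.sum_congr rfl fun x _ ↦ ?_
  rw [hμ, mul_assoc, ENNReal.mul_rpow_of_nonneg _ _ (by norm_num : (0 : ℝ) ≤ 1 / 2), ← sq,
    ← ENNReal.rpow_natCast_mul]
  norm_num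

end Affinity

section Approx

variable {α : Type*} [mα : MeasurableSpace α] {μ ν : Measure α}

lemma mutuallySingular_of_forall_exists_measure_le
    (h : ∀ ε > 0, ∃ A, MeasurableSet A ∧ ν A ≤ ε ∧ μ Aᶜ ≤ ε) : μ ⟂ₘ ν := by
  refine Measure.mutuallySingular_of_disjoint fun ξ hξμ hξν ↦ ?_
  suffices ξ Set.univ = 0 from (Measure.measure_univ_eq_zero.1 this).le
  refine le_antisymm (le_of_forall_gt_imp_ge_of_dense fun ε hε ↦ ?_) zero_le
  obtain ⟨A, hA, hνA, hμA⟩ := h (ε / 2) (ENNReal.half_pos hε.ne')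
  calc ξ Set.univ = ξ A + ξ Aᶜ := (measure_add_measure_compl hA).symm
    _ ≤ ε / 2 + ε / 2 := add_le_add ((hξν A).trans hνA) ((hξμ Aᶜ).trans hμA)
    _ = ε := ENNReal.add_halves ε

lemma measure_le_add_of_forall_mem_isSetAlgebra [IsFiniteMeasure μ] [IsFiniteMeasure ν]
    {C : Set (Set α)} (hC : IsSetAlgebra C) (hgen : mα = MeasurableSpace.generateFrom C)
    {ε : ℝ≥0∞} (h : ∀ B ∈ C, μ B ≤ ν B + ε) {A : Set α} (hA : MeasurableSet A) :
    μ A ≤ ν A + ε := by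
  refine ENNReal.le_of_forall_pos_le_add fun δ hδ _ ↦ ?_
  obtain ⟨B, hBC, hB⟩ : ∃ B ∈ C, (μ + ν) (B ∆ A) < δ :=
    exists_measure_symmDiff_lt_of_generateFrom_isSetRing hC.isSetRing
      ⟨{Set.univ}, Set.countable_singleton _, by simpa using hC.univ_mem, by simp⟩ hgen hA
      (by simpa using hδ)
  calc μ A ≤ μ (B ∆ A) + μ B := by
        rw [symmDiff_comm]
        exact tsub_le_iff_right.1 le_measure_symmDiff
    _ ≤ μ (B ∆ A) + (ν B + ε) := by gcongr; exact h B hBC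
    _ ≤ μ (B ∆ A) + (ν (B ∆ A) + ν A + ε) := by
        gcongr
        exact tsub_le_iff_right.1 le_measure_symmDiff
    _ = ν A + ε + (μ + ν) (B ∆ A) := by rw [Measure.add_apply]; ring
    _ ≤ ν A + ε + δ := by gcongr

end Approx

section Product

variable {ι : Type*} {X : ι → Type*} [∀ k, MeasurableSpace (X k)] {μ ν : ∀ k, Measure (X k)}

lemma absolutelyContinuous_piecewise [DecidableEq ι] (h : ∀ k, μ k ≪ ν k) (s : Finset ι) (k : ι) :
    μ k ≪ s.piecewise μ ν k :=
  s.piecewise_cases μ ν (fun m ↦ μ k ≪ m) .rfl (h k)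

variable [∀ k, IsProbabilityMeasure (μ k)] [∀ k, IsProbabilityMeasure (ν k)]

lemma lintegral_prod_infinitePi (s : Finset ι) {f : ∀ k, X k → ℝ≥0∞} (hf : ∀ k, Measurable (f k)) :
    ∫⁻ x, ∏ k ∈ s, f k (x k) ∂Measure.infinitePi ν = ∏ k ∈ s, ∫⁻ y, f k y ∂ν k := by
  refine (lintegral_prod_eq_prod_lintegral_of_indepFun s (fun k (x : ∀ k, X k) ↦ f k (x k))
    (iIndepFun_infinitePi hf) fun k ↦ (hf k).comp (measurable_pi_apply k)).trans ?_
  exact Finset.prod_congr rfl fun k _ ↦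
    (measurePreserving_eval_infinitePi ν k).lintegral_comp (hf k)

instance isProbabilityMeasure_piecewise (s : Finset ι) [∀ k, Decidable (k ∈ s)] (k : ι) :
    IsProbabilityMeasure (s.piecewise μ ν k) :=
  s.piecewise_cases μ ν (fun m ↦ IsProbabilityMeasure m) inferInstance inferInstance

lemma setLIntegral_pi_prod_infinitePi (s : Finset ι) {f : ∀ k, X k → ℝ≥0∞}
    (hf : ∀ k, Measurable (f k)) {A : ∀ k, Set (X k)} (hA : ∀ k, MeasurableSet (A k)) :
    ∫⁻ x in (s : Set ι).pi A, ∏ k ∈ s, f k (x k) ∂Measure.infinitePi ν =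
      ∏ k ∈ s, ∫⁻ y in A k, f k y ∂ν k := by
  have hind (x : ∀ k, X k) : ((s : Set ι).pi A).indicator (fun x ↦ ∏ k ∈ s, f k (x k)) x =
      ∏ k ∈ s, (A k).indicator (f k) (x k) := by
    by_cases hx : x ∈ (s : Set ι).pi A
    · rw [Set.indicator_of_mem hx]
      exact Finset.prod_congr rfl fun k hk ↦ (Set.indicator_of_mem (hx k hk) _).symm
    · obtain ⟨k, hk, hxk⟩ : ∃ k ∈ s, x k ∉ A k := by simpa [Set.mem_pi] using hx
      rw [Set.indicator_of_notMem hx, Finset.prod_eq_zero hk (Set.indicator_of_notMem hxk _)]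
  rw [← lintegral_indicator (.pi s.countable_toSet fun k _ ↦ hA k), lintegral_congr hind,
    lintegral_prod_infinitePi s fun k ↦ (hf k).indicator (hA k)]
  exact Finset.prod_congr rfl fun k _ ↦ lintegral_indicator (hA k) _

lemma infinitePi_piecewise_eq_withDensity [DecidableEq ι] (h : ∀ k, μ k ≪ ν k) (s : Finset ι) :
    Measure.infinitePi (s.piecewise μ ν) =
      (Measure.infinitePi ν).withDensity fun x ↦ ∏ k ∈ s, (μ k).rnDeriv (ν k) (x k) := by
  refine (Measure.eq_infinitePi _ fun t A hA ↦ ?_).symm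
  let A' : ∀ k, Set (X k) := t.piecewise A fun _ ↦ Set.univ
  have hA' (k : ι) : MeasurableSet (A' k) :=
    t.piecewise_cases A _ (fun B ↦ MeasurableSet B) (hA k) .univ
  let f : ∀ k, X k → ℝ≥0∞ := s.piecewise (fun k ↦ (μ k).rnDeriv (ν k)) 1
  have hf (k : ι) : Measurable (f k) :=
    s.piecewise_cases (fun k ↦ (μ k).rnDeriv (ν k)) 1 (fun g ↦ Measurable g)
      (Measure.measurable_rnDeriv _ _) measurable_one
  have hbox : (t : Set ι).pi A = ((s ∪ t : Finset ι) : Set ι).pi A' := by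
    ext x
    simp only [A', Set.mem_pi, Finset.piecewise]
    grind
  have hdensity (x : ∀ k, X k) :
      ∏ k ∈ s, (μ k).rnDeriv (ν k) (x k) = ∏ k ∈ s ∪ t, f k (x k) := by
    rw [← Finset.prod_subset Finset.subset_union_left fun k _ hk ↦ by simp [f, hk]]
    exact Finset.prod_congr rfl fun k hk ↦ by simp [f, hk]
  have hint (k : ι) : ∫⁻ y in A' k, f k y ∂ν k = s.piecewise μ ν k (A' k) := by
    by_cases hk : k ∈ s
    · simp only [f, hk, Finset.piecewise_eq_of_mem]
      rw [← withDensity_apply _ (hA' k), Measure.withDensity_rnDeriv_eq _ _ (h k)]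
    · simp [f, hk]
  rw [withDensity_apply _ (.pi t.countable_toSet fun k _ ↦ hA k), lintegral_congr hdensity, hbox,
    setLIntegral_pi_prod_infinitePi _ hf hA', Finset.prod_congr rfl fun k _ ↦ hint k,
    ← Finset.prod_subset Finset.subset_union_right fun k _ hk ↦ by simp [A', hk]]
  exact Finset.prod_congr rfl fun k hk ↦ by simp [A', hk]

lemma infinitePi_piecewise_absolutelyContinuous [DecidableEq ι] (h : ∀ k, μ k ≪ ν k)
    (s : Finset ι) : Measure.infinitePi (s.piecewise μ ν) ≪ Measure.infinitePi ν :=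
  infinitePi_piecewise_eq_withDensity h s ▸ withDensity_absolutelyContinuous _ _

lemma pi_absolutelyContinuous [Fintype ι] (h : ∀ k, μ k ≪ ν k) :
    Measure.pi μ ≪ Measure.pi ν := by
  classical
  simpa [Measure.infinitePi_eq_pi] using infinitePi_piecewise_absolutelyContinuous h Finset.univ

lemma hellingerAffinity_pi [Fintype ι] (h : ∀ k, μ k ≪ ν k) :
    hellingerAffinity (Measure.pi μ) (Measure.pi ν) = ∏ k, hellingerAffinity (μ k) (ν k) := by
  classical
  have hd := infinitePi_piecewise_eq_withDensity h Finset.univ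
  simp only [Finset.piecewise_univ, Measure.infinitePi_eq_pi] at hd
  rw [hd, hellingerAffinity_withDensity (by fun_prop), ← Measure.infinitePi_eq_pi]
  simp_rw [← ENNReal.prod_rpow_of_nonneg (by norm_num : (0 : ℝ) ≤ 1 / 2)]
  exact lintegral_prod_infinitePi _ (f := fun k y ↦ (μ k).rnDeriv (ν k) y ^ (1 / 2 : ℝ))
    fun k ↦ (Measure.measurable_rnDeriv _ _).pow_const _

lemma mutuallySingular_infinitePi (h : ∀ k, μ k ≪ ν k)
    (h0 : ⨅ s : Finset ι, ∏ k ∈ s, hellingerAffinity (μ k) (ν k) = 0) :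
    Measure.infinitePi μ ⟂ₘ Measure.infinitePi ν := by
  refine mutuallySingular_of_forall_exists_measure_le fun ε hε ↦ ?_
  obtain ⟨s, hs⟩ := iInf_lt_iff.1 (h0.trans_lt hε)
  obtain ⟨A, hA, hνA, hμA⟩ := exists_measure_le_hellingerAffinity
    (pi_absolutelyContinuous fun k : s ↦ h k)
  rw [hellingerAffinity_pi fun k : s ↦ h k,
    Finset.prod_coe_sort s fun k ↦ hellingerAffinity (μ k) (ν k)] at hνA hμA
  refine ⟨cylinder s A, hA.cylinder, ?_, ?_⟩
  · rw [Measure.infinitePi_cylinder ν hA]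
    exact hνA.trans hs.le
  · rw [compl_cylinder, Measure.infinitePi_cylinder μ hA.compl]
    exact hμA.trans hs.le

lemma hellingerAffinity_pi_piecewise [DecidableEq ι] (h : ∀ k, μ k ≪ ν k) (s t : Finset ι) :
    hellingerAffinity (Measure.pi fun k : t ↦ μ k)
        (Measure.pi fun k : t ↦ s.piecewise μ ν k) =
      ∏ k ∈ t \ s, hellingerAffinity (μ k) (ν k) := by
  rw [hellingerAffinity_pi fun k : t ↦ absolutelyContinuous_piecewise h s k,
    Finset.prod_coe_sort t fun k ↦ hellingerAffinity (μ k) (s.piecewise μ ν k)]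
  calc ∏ k ∈ t, hellingerAffinity (μ k) (s.piecewise μ ν k)
      = ∏ k ∈ t \ s, hellingerAffinity (μ k) (s.piecewise μ ν k) :=
        (Finset.prod_subset Finset.sdiff_subset fun k hkt hk ↦ by
          have hks : k ∈ s := by simpa [hkt] using hk
          simp [hks, hellingerAffinity_self]).symm
    _ = ∏ k ∈ t \ s, hellingerAffinity (μ k) (ν k) :=
        Finset.prod_congr rfl fun k hk ↦ by simp [(Finset.mem_sdiff.1 hk).2]

lemma infinitePi_le_two_mul_infinitePi_piecewise_add [DecidableEq ι] (h : ∀ k, μ k ≪ ν k)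
    {s : Finset ι} {a : ℝ≥0∞} (ha1 : a ≤ 1)
    (ha : ∀ t, Disjoint s t → a ≤ ∏ k ∈ t, hellingerAffinity (μ k) (ν k))
    {A : Set (∀ k, X k)} (hA : MeasurableSet A) :
    Measure.infinitePi μ A ≤ 2 * Measure.infinitePi (s.piecewise μ ν) A + 4 * (1 - a) := by
  suffices ∀ B ∈ measurableCylinders X, Measure.infinitePi μ B ≤
      ((2 : ℝ≥0) • Measure.infinitePi (s.piecewise μ ν)) B + 4 * (1 - a) from
    measure_le_add_of_forall_mem_isSetAlgebra isSetAlgebra_measurableCylinders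
      generateFrom_measurableCylinders.symm this hA
  intro B hB
  obtain ⟨t, S, hS, rfl⟩ := (mem_measurableCylinders B).1 hB
  rw [Measure.smul_apply, ENNReal.smul_def, smul_eq_mul, ENNReal.coe_ofNat,
    Measure.infinitePi_cylinder μ hS, Measure.infinitePi_cylinder _ hS]
  have ha4 : 4 * a ≠ ∞ := ENNReal.mul_ne_top (by simp) (ne_top_of_le_ne_top (by simp) ha1)
  refine (ENNReal.add_le_add_iff_right ha4).1 ?_
  set μt := Measure.pi fun k : t ↦ μ k
  set ρt := Measure.pi fun k : t ↦ s.piecewise μ ν k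
  have haff : a ≤ hellingerAffinity μt ρt :=
    (ha _ Finset.disjoint_sdiff).trans_eq (hellingerAffinity_pi_piecewise h s t).symm
  calc μt S + 4 * a ≤ μt S + 4 * hellingerAffinity μt ρt := by gcongr
    _ ≤ 2 * ρt S + 2 * (μt Set.univ + ρt Set.univ) :=
        measure_add_four_mul_hellingerAffinity_le
          (pi_absolutelyContinuous fun k : t ↦ absolutelyContinuous_piecewise h s k) hS
    _ = 2 * ρt S + 4 * (1 - a + a) := by
        rw [tsub_add_cancel_of_le ha1, measure_univ, measure_univ]
        ring
    _ = 2 * ρt S + 4 * (1 - a) + 4 * a := by ring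

lemma exists_forall_disjoint_le_prod {a : ι → ℝ≥0∞}
    (h : ⨅ s : Finset ι, ∏ k ∈ s, a k ≠ 0) {b : ℝ≥0∞} (hb : b < 1) :
    ∃ s : Finset ι, ∀ t, Disjoint s t → b ≤ ∏ k ∈ t, a k := by
  classical
  set c := ⨅ s : Finset ι, ∏ k ∈ s, a k with hc
  have hc_top : c ≠ ∞ := ne_top_of_le_ne_top ENNReal.one_ne_top ((iInf_le _ ∅).trans (by simp))
  obtain ⟨s, hs⟩ : ∃ s : Finset ι, b * ∏ k ∈ s, a k < c := by
    refine iInf_lt_iff.1 ?_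
    rw [← ENNReal.mul_iInf fun hb' ↦ absurd hb' hb.ne_top, ← hc]
    simpa using ENNReal.mul_lt_mul_left h hc_top hb
  refine ⟨s, fun t hst ↦ ?_⟩
  by_contra! hlt
  refine (hs.trans_le (iInf_le _ (t ∪ s))).not_ge ?_
  rw [Finset.prod_union hst.symm]
  gcongr

lemma absolutelyContinuous_infinitePi (h : ∀ k, μ k ≪ ν k)
    (h0 : ⨅ s : Finset ι, ∏ k ∈ s, hellingerAffinity (μ k) (ν k) ≠ 0) :
    Measure.infinitePi μ ≪ Measure.infinitePi ν := by
  classical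
  refine Measure.AbsolutelyContinuous.mk fun A hA hνA ↦ ?_
  have hle (a : ℝ≥0∞) (ha : a < 1) : Measure.infinitePi μ A ≤ 4 * (1 - a) := by
    obtain ⟨s, hs⟩ := exists_forall_disjoint_le_prod h0 ha
    calc Measure.infinitePi μ A
        ≤ 2 * Measure.infinitePi (s.piecewise μ ν) A + 4 * (1 - a) :=
          infinitePi_le_two_mul_infinitePi_piecewise_add h ha.le hs hA
      _ = 4 * (1 - a) := by simp [infinitePi_piecewise_absolutelyContinuous h s hνA]
  have hlim : Tendsto (fun a : ℝ≥0∞ ↦ 4 * (1 - a)) (𝓝[<] 1) (𝓝 (4 * (1 - 1))) :=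
    (ENNReal.Tendsto.const_mul (ENNReal.Tendsto.sub tendsto_const_nhds tendsto_id (by simp))
      (by simp)).mono_left nhdsWithin_le_nhds
  simpa using ge_of_tendsto hlim (eventually_nhdsWithin_of_forall hle)

theorem kakutani_dichotomy_general (h : ∀ k, μ k ≪ ν k) :
    (Measure.infinitePi μ ≪ Measure.infinitePi ν ↔
      0 < ⨅ s : Finset ι, ∏ k ∈ s, hellingerAffinity (μ k) (ν k)) ∧
    (Measure.infinitePi μ ⟂ₘ Measure.infinitePi ν ↔
      ⨅ s : Finset ι, ∏ k ∈ s, hellingerAffinity (μ k) (ν k) = 0) := by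
  have hnot (hac : Measure.infinitePi μ ≪ Measure.infinitePi ν) :
      ¬ Measure.infinitePi μ ⟂ₘ Measure.infinitePi ν := fun hs ↦
    IsProbabilityMeasure.ne_zero _
      (Measure.eq_zero_of_absolutelyContinuous_of_mutuallySingular hac hs)
  have hac := absolutelyContinuous_infinitePi h
  have hms := mutuallySingular_infinitePi h
  rw [pos_iff_ne_zero]
  exact ⟨⟨fun hμν h0 ↦ hnot hμν (hms h0), hac⟩, fun hs ↦ not_not.1 fun h0 ↦ hnot (hac h0) hs, hms⟩

end Product

section Cylinders

variable {E : ℕ → Type*} [∀ n, MeasurableSpace (E n)]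

lemma ext_of_piNat_cylinder [∀ n, Countable (E n)] [∀ n, MeasurableSingletonClass (E n)]
    {μ ν : Measure (∀ n, E n)} [IsFiniteMeasure μ]
    (h : ∀ x n, μ (PiNat.cylinder x n) = ν (PiNat.cylinder x n)) : μ = ν := by
  let _ (n : ℕ) : TopologicalSpace (E n) := ⊥
  have _ (n : ℕ) : DiscreteTopology (E n) := ⟨rfl⟩
  refine ext_of_generate_finite {s | ∃ x n, s = PiNat.cylinder x n} ?_ ?_ ?_ ?_
  · rw [← (PiNat.isTopologicalBasis_cylinders E).borel_eq_generateFrom]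
    exact BorelSpace.measurable_eq
  · rintro _ ⟨x, m, rfl⟩ _ ⟨y, n, rfl⟩ ⟨z, hzx, hzy⟩
    refine ⟨z, max m n, ?_⟩
    rw [← PiNat.mem_cylinder_iff_eq.1 hzx, ← PiNat.mem_cylinder_iff_eq.1 hzy]
    ext w
    simp only [Set.mem_inter_iff, PiNat.mem_cylinder_iff, lt_max_iff]
    grind
  · rintro _ ⟨x, n, rfl⟩
    exact h x n
  · rcases isEmpty_or_nonempty (∀ n, E n) with _ | ⟨⟨x⟩⟩
    · rw [Set.eq_empty_of_isEmpty Set.univ, measure_empty, measure_empty]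
    · simpa using h x 0

lemma eq_infinitePi_of_piNat_cylinder [∀ n, Countable (E n)]
    [∀ n, MeasurableSingletonClass (E n)] {μ : Measure (∀ n, E n)} [IsFiniteMeasure μ]
    {m : ∀ n, Measure (E n)} [∀ n, IsProbabilityMeasure (m n)]
    (h : ∀ x n, μ (PiNat.cylinder x n) = ∏ k ∈ range n, m k {x k}) :
    μ = Measure.infinitePi m :=
  ext_of_piNat_cylinder fun x n ↦ by
    rw [h, PiNat.cylinder_eq_pi, Measure.infinitePi_pi m fun k _ ↦ measurableSet_singleton (x k)]

end Cylinders

section Weights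

/-- The probability mass function with real weights `p i`, used to turn the numbers `p k i` and
`q k i` into the marginal measures of the product; coerces the weights by `ENNReal.ofReal`. -/
noncomputable def weightPMF {α : Type*} [Fintype α] (p : α → ℝ) (hp : ∀ i, 0 ≤ p i)
    (hps : ∑ i, p i = 1) : PMF α :=
  .ofFintype (fun i ↦ ENNReal.ofReal (p i)) <| by
    rw [← ENNReal.ofReal_sum_of_nonneg fun i _ ↦ hp i, hps, ENNReal.ofReal_one]

lemma toMeasure_weightPMF_singleton {α : Type*} [Fintype α] [MeasurableSpace α]
    [MeasurableSingletonClass α] {p : α → ℝ} (hp : ∀ i, 0 ≤ p i) (hps : ∑ i, p i = 1) (i : α) :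
    (weightPMF p hp hps).toMeasure {i} = ENNReal.ofReal (p i) := by
  rw [PMF.toMeasure_apply_singleton _ _ (measurableSet_singleton i), weightPMF,
    PMF.ofFintype_apply]

lemma eq_infinitePi_weightPMF {E : ℕ → Type*} [∀ n, Fintype (E n)] [∀ n, MeasurableSpace (E n)]
    [∀ n, MeasurableSingletonClass (E n)] {μ : Measure (∀ n, E n)} [IsFiniteMeasure μ]
    {p : ∀ k, E k → ℝ} (hp : ∀ k i, 0 ≤ p k i) (hps : ∀ k, ∑ i, p k i = 1)
    (hμ : ∀ (n : ℕ) (ω : ∀ k, E k),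
      μ {x | ∀ k < n, x k = ω k} = ENNReal.ofReal (∏ k ∈ range n, p k (ω k))) :
    μ = Measure.infinitePi fun k ↦ (weightPMF (p k) (hp k) (hps k)).toMeasure :=
  eq_infinitePi_of_piNat_cylinder fun ω n ↦ by
    calc μ {x | ∀ k < n, x k = ω k}
        = ∏ k ∈ range n, ENNReal.ofReal (p k (ω k)) := by
          rw [hμ, ENNReal.ofReal_prod_of_nonneg fun k _ ↦ hp k (ω k)]
      _ = ∏ k ∈ range n, (weightPMF (p k) (hp k) (hps k)).toMeasure {ω k} :=
          Finset.prod_congr rfl fun k _ ↦ (toMeasure_weightPMF_singleton _ _ _).symm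

lemma absolutelyContinuous_of_forall_singleton_ne_zero {α : Type*} [MeasurableSpace α]
    {μ ν : Measure α} (h : ∀ x, ν {x} ≠ 0) : μ ≪ ν := by
  intro A hA
  rw [Set.eq_empty_of_forall_notMem fun x hx ↦
    h x (measure_mono_null (Set.singleton_subset_iff.2 hx) hA), measure_empty]

variable {α : Type*} [Fintype α] [MeasurableSpace α] [MeasurableSingletonClass α]
  {p q : α → ℝ} (hp : ∀ i, 0 ≤ p i) (hps : ∑ i, p i = 1) (hq : ∀ i, 0 < q i) (hqs : ∑ i, q i = 1)

lemma absolutelyContinuous_weightPMF (μ : Measure α) :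
    μ ≪ (weightPMF q (fun i ↦ (hq i).le) hqs).toMeasure :=
  absolutelyContinuous_of_forall_singleton_ne_zero fun i ↦ by
    simpa only [toMeasure_weightPMF_singleton, ne_eq, ENNReal.ofReal_eq_zero, not_le] using hq i

lemma hellingerAffinity_weightPMF :
    hellingerAffinity (weightPMF p hp hps).toMeasure
        (weightPMF q (fun i ↦ (hq i).le) hqs).toMeasure =
      ENNReal.ofReal (∑ i, √(p i * q i)) := by
  rw [hellingerAffinity_eq_sum (absolutelyContinuous_weightPMF hq hqs _),
    ENNReal.ofReal_sum_of_nonneg fun i _ ↦ Real.sqrt_nonneg _]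
  refine Finset.sum_congr rfl fun i _ ↦ ?_
  rw [toMeasure_weightPMF_singleton, toMeasure_weightPMF_singleton,
    ← ENNReal.ofReal_mul (hp i), Real.sqrt_eq_rpow,
    ENNReal.ofReal_rpow_of_nonneg (mul_nonneg (hp i) (hq i).le) (by norm_num)]

end Weights

section PartialProducts

lemma tendsto_prod_range_iInf_prod {b : ℕ → ℝ≥0∞} (hb : ∀ k, b k ≤ 1) :
    Tendsto (fun n ↦ ∏ k ∈ range n, b k) atTop (𝓝 (⨅ s : Finset ℕ, ∏ k ∈ s, b k)) := by
  have hanti : Antitone fun s : Finset ℕ ↦ ∏ k ∈ s, b k := fun s t hst ↦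
    Finset.prod_le_prod_of_subset_of_le_one' hst fun k _ _ ↦ hb k
  exact (tendsto_atTop_iInf hanti).comp tendsto_finset_range

variable {a : ℕ → ℝ}

lemma tendsto_ofReal_prod_range (h0 : ∀ k, 0 ≤ a k) (h1 : ∀ k, a k ≤ 1) :
    Tendsto (fun n ↦ ENNReal.ofReal (∏ k ∈ range n, a k)) atTop
      (𝓝 (⨅ s : Finset ℕ, ∏ k ∈ s, ENNReal.ofReal (a k))) := by
  simpa only [ENNReal.ofReal_prod_of_nonneg fun k _ ↦ h0 k] using
    tendsto_prod_range_iInf_prod fun k ↦ ENNReal.ofReal_le_one.2 (h1 k)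

lemma iInf_prod_ofReal_pos_iff (h0 : ∀ k, 0 ≤ a k) (h1 : ∀ k, a k ≤ 1) :
    0 < ⨅ s : Finset ℕ, ∏ k ∈ s, ENNReal.ofReal (a k) ↔ ∃ c > 0, ∀ n, c ≤ ∏ k ∈ range n, a k := by
  constructor
  · intro h
    have hle (s : Finset ℕ) := iInf_le (fun s : Finset ℕ ↦ ∏ k ∈ s, ENNReal.ofReal (a k)) s
    have htop := ne_top_of_le_ne_top ENNReal.one_ne_top ((hle ∅).trans_eq Finset.prod_empty)
    refine ⟨_, ENNReal.toReal_pos h.ne' htop, fun n ↦ ?_⟩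
    rw [← ENNReal.le_ofReal_iff_toReal_le htop (Finset.prod_nonneg fun k _ ↦ h0 k),
      ENNReal.ofReal_prod_of_nonneg fun k _ ↦ h0 k]
    exact hle _
  · rintro ⟨c, hc, hle⟩
    exact (ENNReal.ofReal_pos.2 hc).trans_le <|
      ge_of_tendsto' (tendsto_ofReal_prod_range h0 h1) fun n ↦ ENNReal.ofReal_le_ofReal (hle n)

lemma iInf_prod_ofReal_eq_zero_iff (h0 : ∀ k, 0 ≤ a k) (h1 : ∀ k, a k ≤ 1) :
    ⨅ s : Finset ℕ, ∏ k ∈ s, ENNReal.ofReal (a k) = 0 ↔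
      Tendsto (fun n ↦ ∏ k ∈ range n, a k) atTop (𝓝 0) := by
  have hlim := tendsto_ofReal_prod_range h0 h1
  constructor
  · intro h
    rw [h] at hlim
    simpa only [Function.comp_def, ENNReal.toReal_ofReal (Finset.prod_nonneg fun k _ ↦ h0 k),
      ENNReal.toReal_zero] using (ENNReal.tendsto_toReal ENNReal.zero_ne_top).comp hlim
  · intro h
    simpa using tendsto_nhds_unique hlim (ENNReal.tendsto_ofReal h)

end PartialProducts

/-- Kakutani's dichotomy for infinite products of discrete probability measures on
a countable product of finite sets.  `μ` and `ν` are the infinite product measures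
with marginals `μ_k(i) = p_{ik} ≥ 0` and `ν_k(i) = q_{ik} > 0` (characterized by
their values on cylinders).  Then `μ ≪ ν` iff the infinite product of the Hellinger
affinities `∑_i √(p_{ik} q_{ik})` is positive (i.e. the nonincreasing partial products
are bounded below by a positive constant), and `μ ⊥ ν` iff this product equals `0`. -/
theorem kakutani_dichotomy (N : ℕ → ℕ) (p q : (k : ℕ) → Fin (N k + 1) → ℝ)
    (μ ν : Measure ((k : ℕ) → Fin (N k + 1)))
    [IsProbabilityMeasure μ] [IsProbabilityMeasure ν]
    (hp : ∀ k i, 0 ≤ p k i) (hq : ∀ k i, 0 < q k i)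
    (hps : ∀ k, ∑ i, p k i = 1) (hqs : ∀ k, ∑ i, q k i = 1)
    (hμ : ∀ (n : ℕ) (ω : (k : ℕ) → Fin (N k + 1)),
      μ {x | ∀ k < n, x k = ω k} = ENNReal.ofReal (∏ k ∈ Finset.range n, p k (ω k)))
    (hν : ∀ (n : ℕ) (ω : (k : ℕ) → Fin (N k + 1)),
      ν {x | ∀ k < n, x k = ω k} = ENNReal.ofReal (∏ k ∈ Finset.range n, q k (ω k))) :
    (μ ≪ ν ↔ ∃ c > 0, ∀ n, c ≤ ∏ k ∈ Finset.range n, ∑ i, Real.sqrt (p k i * q k i)) ∧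
    (μ.MutuallySingular ν ↔
      Tendsto (fun n => ∏ k ∈ Finset.range n, ∑ i, Real.sqrt (p k i * q k i))
        atTop (nhds 0)) := by
  have haff (k : ℕ) := hellingerAffinity_weightPMF (hp k) (hps k) (hq k) (hqs k)
  have hnonneg (k : ℕ) : 0 ≤ ∑ i, √(p k i * q k i) := Finset.sum_nonneg fun i _ ↦ Real.sqrt_nonneg _
  have hle_one (k : ℕ) : ∑ i, √(p k i * q k i) ≤ 1 :=
    ENNReal.ofReal_le_one.1 ((haff k).symm.trans_le hellingerAffinity_le_one)
  rw [eq_infinitePi_weightPMF hp hps hμ, eq_infinitePi_weightPMF (fun k i ↦ (hq k i).le) hqs hν,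
    ← iInf_prod_ofReal_pos_iff hnonneg hle_one, ← iInf_prod_ofReal_eq_zero_iff hnonneg hle_one]
  simpa only [haff] using
    kakutani_dichotomy_general (fun k ↦ absolutelyContinuous_weightPMF (hq k) (hqs k)
      (weightPMF (p k) (hp k) (hps k)).toMeasure)
end

section
/- Let s ≥ 2 and let q_0,...,q_{s-1} > 0 with ∑ q_i = 1, and let p_0,...,p_{s-1} ≥ 0 with ∑ p_i = 1. Let ξ have independent identically distributed Q-digits: P(digit k of ξ = i) = p_i in the Q-representation with ratios q_i. Then the Hausdorff dimension of the measure μ_ξ (the infimum of Hausdorff dimensions of Borel sets of full μ_ξ-measure) equals (∑_{i=0}^{s-1} p_i ln p_i)/(∑_{i=0}^{s-1} p_i ln q_i), with the convention 0·ln 0 = 0. -/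
open MeasureTheory Filter Finset Topology

/-- The coding map of the `Q`-representation with constant column proportions
`q₀, ..., q_s` (digit set `{0, ..., s}`): it sends a digit sequence `ω` to the
point `∑_k D_k L_{k-1}` of `[0,1]`, the unique point in the intersection of the
corresponding nested cylinder intervals. -/
noncomputable def codingMapC (s : ℕ) (q : Fin (s + 1) → ℝ) (ω : ℕ → Fin (s + 1)) : ℝ :=
  ∑' k : ℕ, (∑ j : Fin (s + 1), if (j : ℕ) < (ω k : ℕ) then q j else 0) *
    ∏ t ∈ Finset.range k, q (ω t)

/-!
Write `d` for the claimed dimension. By the strong law of large numbers for `log p` and `log q`,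
for almost every digit sequence and any `t < d < u` the mass of the cylinder of length `n` lies
between the `u`-th and the `t`-th power of the length of the corresponding interval, for all large
`n`. Where the lower bound on the mass holds from a given `n` on, covering by cylinders of the same
length bounds the `u`-dimensional Hausdorff measure. Where the upper bound holds from a given `n`
on, the measure satisfies the Frostman condition `μ (closedBall x r) ≤ K * r ^ t`, since a ball of
radius `r` meets only boundedly many intervals of length comparable to `r`; so every set of positive
measure has dimension at least `t`.
-/

namespace QRepresentation

open Set
open scoped ENNReal NNReal

section Cylinders

variable {α : Type*}

theorem isPiSystem_cylinders :
    IsPiSystem {S : Set (ℕ → α) | ∃ ω n, S = PiNat.cylinder ω n} := by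
  rintro _ ⟨ω, n, rfl⟩ _ ⟨ω', m, rfl⟩ ⟨z, hz, hz'⟩
  refine ⟨z, max n m, ?_⟩
  rw [← PiNat.mem_cylinder_iff_eq.1 hz, ← PiNat.mem_cylinder_iff_eq.1 hz']
  ext x
  simp only [mem_inter_iff, PiNat.mem_cylinder_iff, lt_max_iff, or_imp, forall_and]

theorem pairwiseDisjoint_range_cylinder (n : ℕ) :
    (range fun ω : ℕ → α ↦ PiNat.cylinder ω n).PairwiseDisjoint id := by
  rintro _ ⟨ω, rfl⟩ _ ⟨ω', rfl⟩ hne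
  refine Set.disjoint_left.2 fun z hz hz' ↦ hne ?_
  exact (PiNat.mem_cylinder_iff_eq.1 hz).symm.trans (PiNat.mem_cylinder_iff_eq.1 hz')

theorem measurableSet_cylinder [MeasurableSpace α] [MeasurableSingletonClass α]
    (ω : ℕ → α) (n : ℕ) : MeasurableSet (PiNat.cylinder ω n) := by
  rw [PiNat.cylinder_eq_pi]
  exact .pi (Finset.countable_toSet _) fun _ _ ↦ measurableSet_singleton _

theorem countable_range_cylinder [Countable α] (n : ℕ) :
    (range fun ω : ℕ → α ↦ PiNat.cylinder ω n).Countable := by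
  let _ : TopologicalSpace α := ⊥
  have : DiscreteTopology α := ⟨rfl⟩
  refine (pairwiseDisjoint_range_cylinder n).countable_of_isOpen ?_ ?_
  · rintro _ ⟨ω, rfl⟩
    exact PiNat.isOpen_cylinder _ ω n
  · rintro _ ⟨ω, rfl⟩
    exact ⟨ω, PiNat.self_mem_cylinder ω n⟩

theorem infinitePi_cylinder [MeasurableSpace α] [MeasurableSingletonClass α]
    (ν : Measure α) [IsProbabilityMeasure ν] (ω : ℕ → α) (n : ℕ) :
    Measure.infinitePi (fun _ : ℕ ↦ ν) (PiNat.cylinder ω n) =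
      ∏ k ∈ Finset.range n, ν {ω k} := by
  rw [PiNat.cylinder_eq_pi, Measure.infinitePi_pi _ fun _ _ ↦ measurableSet_singleton _]

theorem generateFrom_cylinders [Countable α] [MeasurableSpace α] [MeasurableSingletonClass α] :
    MeasurableSpace.generateFrom {S : Set (ℕ → α) | ∃ ω n, S = PiNat.cylinder ω n} =
      MeasurableSpace.pi := by
  let _ : TopologicalSpace α := ⊥
  have : DiscreteTopology α := ⟨rfl⟩
  rw [← (PiNat.isTopologicalBasis_cylinders fun _ ↦ α).borel_eq_generateFrom,
    BorelSpace.measurable_eq (α := ℕ → α)]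

theorem eq_infinitePi_of_cylinder [Countable α] [MeasurableSpace α] [MeasurableSingletonClass α]
    {ν : Measure α} [IsProbabilityMeasure ν] {μ : Measure (ℕ → α)} [IsProbabilityMeasure μ]
    (h : ∀ ω n, μ (PiNat.cylinder ω n) = ∏ k ∈ Finset.range n, ν {ω k}) :
    μ = Measure.infinitePi fun _ ↦ ν := by
  refine ext_of_generate_finite _ generateFrom_cylinders.symm isPiSystem_cylinders ?_ (by simp)
  rintro _ ⟨ω, n, rfl⟩
  rw [h, infinitePi_cylinder]

theorem exists_eq_infinitePi_of_cylinder [Countable α] [MeasurableSpace α]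
    [MeasurableSingletonClass α] {p : α → ℝ} (hp : ∀ i, 0 ≤ p i) {μ : Measure (ℕ → α)}
    [IsProbabilityMeasure μ]
    (hμ : ∀ n ω, μ (PiNat.cylinder ω n) = ENNReal.ofReal (∏ k ∈ Finset.range n, p (ω k))) :
    ∃ ν : Measure α, IsProbabilityMeasure ν ∧ (∀ i, ν.real {i} = p i) ∧
      μ = Measure.infinitePi fun _ ↦ ν := by
  have heval : Measurable fun x : ℕ → α ↦ x 0 := measurable_pi_apply 0
  let ν := μ.map fun x ↦ x 0
  have hprob : IsProbabilityMeasure ν := Measure.isProbabilityMeasure_map heval.aemeasurable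
  have hν (i : α) : ν {i} = ENNReal.ofReal (p i) := by
    have hcyl : (fun x : ℕ → α ↦ x 0) ⁻¹' {i} = PiNat.cylinder (fun _ ↦ i) 1 := by
      ext x
      simp only [Set.mem_preimage, mem_singleton_iff, PiNat.mem_cylinder_iff, Nat.lt_one_iff,
        forall_eq]
    rw [Measure.map_apply heval (measurableSet_singleton i), hcyl, hμ, Finset.prod_range_one]
  refine ⟨ν, hprob, fun i ↦ ?_, eq_infinitePi_of_cylinder fun ω n ↦ ?_⟩
  · rw [measureReal_def, hν, ENNReal.toReal_ofReal (hp i)]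
  · simp only [hμ, hν, ENNReal.ofReal_prod_of_nonneg fun _ _ ↦ hp _]

end Cylinders

section Hausdorff

theorem hausdorffMeasure_image_le {α X : Type*} [Countable α] [MeasurableSpace α]
    [MeasurableSingletonClass α] [EMetricSpace X] [MeasurableSpace X] [BorelSpace X]
    {π : (ℕ → α) → X} {μ : Measure (ℕ → α)} {B : Set (ℕ → α)} {t : ℝ} {δ : ℕ → ℝ≥0∞}
    (hδ : Tendsto δ atTop (𝓝 0))
    (hdiam : ∀ᶠ n in atTop, ∀ ω ∈ B, Metric.ediam (π '' PiNat.cylinder ω n) ≤ δ n)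
    (hμ : ∀ᶠ n in atTop, ∀ ω ∈ B,
      Metric.ediam (π '' PiNat.cylinder ω n) ^ t ≤ μ (PiNat.cylinder ω n)) :
    μH[t] (π '' B) ≤ μ univ := by
  let 𝒞 (n : ℕ) : Set (Set (ℕ → α)) := (fun ω ↦ PiNat.cylinder ω n) '' B
  have hsub (n : ℕ) : 𝒞 n ⊆ range fun ω ↦ PiNat.cylinder ω n := image_subset_range _ _
  have (n : ℕ) : Countable (𝒞 n) := ((countable_range_cylinder n).mono (hsub n)).to_subtype
  have hcover (n : ℕ) : π '' B ⊆ ⋃ C : 𝒞 n, π '' C := by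
    rintro _ ⟨ω, hω, rfl⟩
    exact mem_iUnion.2 ⟨⟨_, ω, hω, rfl⟩, ω, PiNat.self_mem_cylinder ω n, rfl⟩
  have htotal (n : ℕ) : ∑' C : 𝒞 n, μ C ≤ μ univ := by
    refine (tsum_meas_le_meas_iUnion_of_disjoint μ ?_ ?_).trans (measure_mono (subset_univ _))
    · rintro ⟨_, ω, -, rfl⟩
      exact measurableSet_cylinder ω n
    · exact ((pairwiseDisjoint_range_cylinder n).subset (hsub n)).subtype _ _
  have hsum : ∀ᶠ n in atTop, ∑' C : 𝒞 n, Metric.ediam (π '' C) ^ t ≤ μ univ := by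
    filter_upwards [hμ] with n hn
    refine le_trans (ENNReal.tsum_le_tsum ?_) (htotal n)
    rintro ⟨_, ω, hω, rfl⟩
    exact hn ω hω
  refine (Measure.hausdorffMeasure_le_liminf_tsum t _ δ hδ (fun n (C : 𝒞 n) ↦ π '' C) ?_
    (.of_forall hcover)).trans (liminf_le_of_frequently_le' hsum.frequently)
  filter_upwards [hdiam] with n hn
  rintro ⟨_, ω, hω, rfl⟩
  exact hn ω hω

theorem measure_le_mul_ediam_rpow {X : Type*} [PseudoMetricSpace X] [MeasurableSpace X]
    {ν : Measure X} {K : ℝ≥0∞} (hK : K ≠ ∞) {t ρ : ℝ} (ht : 0 ≤ t)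
    (hν : ∀ x, ∀ r ∈ Ioo 0 ρ, ν (Metric.closedBall x r) ≤ K * ENNReal.ofReal (r ^ t))
    {U : Set X} (hU : U.Nonempty) (hUρ : Metric.ediam U < ENNReal.ofReal ρ) :
    ν U ≤ K * Metric.ediam U ^ t := by
  obtain ⟨x, hx⟩ := hU
  have hfin : Metric.ediam U ≠ ∞ := (hUρ.trans ENNReal.ofReal_lt_top).ne
  have hdiam : Metric.ediam U = ENNReal.ofReal (Metric.diam U) := (ENNReal.ofReal_toReal hfin).symm
  have hd : 0 ≤ Metric.diam U := Metric.diam_nonneg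
  -- A ball of radius exactly `diam U` would do, except that this radius may be `0`.
  have hlim : Tendsto (fun r : ℝ ↦ K * ENNReal.ofReal (r ^ t)) (𝓝[>] Metric.diam U)
      (𝓝 (K * ENNReal.ofReal (Metric.diam U ^ t))) := by
    refine ENNReal.Tendsto.const_mul (ENNReal.tendsto_ofReal ?_) (.inr hK)
    exact (Real.continuousAt_rpow_const _ t (.inr ht)).tendsto.mono_left nhdsWithin_le_nhds
  rw [hdiam, ENNReal.ofReal_rpow_of_nonneg hd ht]
  rw [hdiam, ENNReal.ofReal_lt_ofReal_iff_of_nonneg hd] at hUρ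
  refine ge_of_tendsto hlim ?_
  filter_upwards [Ioo_mem_nhdsGT hUρ] with r hr
  have hsub : U ⊆ Metric.closedBall x r := fun y hy ↦
    (Metric.dist_le_diam_of_mem' hfin hy hx).trans hr.1.le
  exact (measure_mono hsub).trans (hν x r ⟨hd.trans_lt hr.1, hr.2⟩)

theorem le_mul_hausdorffMeasure {X : Type*} [MetricSpace X] [MeasurableSpace X]
    [BorelSpace X] {ν : Measure X} {K : ℝ≥0∞} (hK0 : K ≠ 0) (hK : K ≠ ∞) {t ρ : ℝ} (ht : 0 ≤ t)
    (hρ : 0 < ρ)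
    (hν : ∀ x, ∀ r ∈ Ioo 0 ρ, ν (Metric.closedBall x r) ≤ K * ENNReal.ofReal (r ^ t)) (E : Set X) :
    ν E ≤ K * μH[t] E := by
  have hle : K⁻¹ • ν ≤ μH[t] := by
    refine Measure.le_hausdorffMeasure t _ (ENNReal.ofReal (ρ / 2))
      (ENNReal.ofReal_pos.2 (half_pos hρ)) fun U hUρ ↦ ?_
    obtain rfl | hU := U.eq_empty_or_nonempty
    · simp only [measure_empty, zero_le]
    · rw [Measure.smul_apply, smul_eq_mul, ENNReal.inv_mul_le_iff hK0 hK]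
      refine measure_le_mul_ediam_rpow hK ht hν hU (hUρ.trans_lt ?_)
      exact (ENNReal.ofReal_lt_ofReal_iff hρ).2 (half_lt_self hρ)
  have hE := hle E
  rwa [Measure.smul_apply, smul_eq_mul, ENNReal.inv_mul_le_iff hK0 hK] at hE

end Hausdorff

section CylWeight

variable {α : Type*}

/-- The multiplicative weight `w (ω 0) ⋯ w (ω (n - 1))` of the cylinder of length `n` around `ω`.
For `w = q` it is the length of the corresponding interval of the `Q`-representation; for digits
drawn independently with probabilities `w` it is the probability of the cylinder. -/
def cylWeight (w : α → ℝ) (n : ℕ) (ω : ℕ → α) : ℝ :=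
  ∏ k ∈ Finset.range n, w (ω k)

variable {w : α → ℝ}

theorem cylWeight_zero (w : α → ℝ) (ω : ℕ → α) : cylWeight w 0 ω = 1 :=
  Finset.prod_range_zero _

theorem cylWeight_succ (w : α → ℝ) (n : ℕ) (ω : ℕ → α) :
    cylWeight w (n + 1) ω = cylWeight w n ω * w (ω n) :=
  Finset.prod_range_succ _ _

theorem cylWeight_pos (hw : ∀ i, 0 < w i) (n : ℕ) (ω : ℕ → α) : 0 < cylWeight w n ω :=
  Finset.prod_pos fun _ _ ↦ hw _

theorem cylWeight_congr (w : α → ℝ) {n : ℕ} {ω ω' : ℕ → α} (h : ω' ∈ PiNat.cylinder ω n) :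
    cylWeight w n ω' = cylWeight w n ω :=
  Finset.prod_congr rfl fun k hk ↦ by rw [h k (Finset.mem_range.1 hk)]

theorem cylWeight_rpow (hw : ∀ i, 0 ≤ w i) (t : ℝ) (n : ℕ) (ω : ℕ → α) :
    cylWeight (fun i ↦ w i ^ t) n ω = cylWeight w n ω ^ t :=
  Real.finsetProd_rpow _ _ (fun _ _ ↦ hw _) t

theorem pow_le_cylWeight {a : ℝ} (ha : 0 ≤ a) (haw : ∀ i, a ≤ w i) (n : ℕ) (ω : ℕ → α) :
    a ^ n ≤ cylWeight w n ω := by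
  simpa only [cylWeight, Finset.prod_const, Finset.card_range] using
    Finset.prod_le_prod (s := Finset.range n) (fun _ _ ↦ ha) fun k _ ↦ haw (ω k)

theorem exists_forall_cylWeight_le_pow [Finite α] [Nonempty α] (hw0 : ∀ i, 0 ≤ w i)
    (hw1 : ∀ i, w i < 1) : ∃ b, 0 ≤ b ∧ b < 1 ∧ ∀ n ω, cylWeight w n ω ≤ b ^ n := by
  obtain ⟨i, hi⟩ := Finite.exists_max w
  refine ⟨w i, hw0 i, hw1 i, fun n ω ↦ ?_⟩
  simpa only [cylWeight, Finset.prod_const, Finset.card_range] using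
    Finset.prod_le_prod (s := Finset.range n) (fun k _ ↦ hw0 (ω k)) fun k _ ↦ hi (ω k)

theorem continuous_cylWeight [TopologicalSpace α] [DiscreteTopology α] (w : α → ℝ) (n : ℕ) :
    Continuous (cylWeight w n) :=
  continuous_finsetProd _ fun k _ ↦ continuous_of_discreteTopology.comp (continuous_apply k)

theorem isClosed_forall_ge_cylWeight_le [TopologicalSpace α] [DiscreteTopology α]
    (u v : α → ℝ) (m : ℕ) : IsClosed {ω | ∀ n ≥ m, cylWeight u n ω ≤ cylWeight v n ω} := by
  simp only [ofPred_forall]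
  exact isClosed_iInter fun n ↦ isClosed_iInter fun _ ↦
    isClosed_le (continuous_cylWeight u n) (continuous_cylWeight v n)

end CylWeight

section BernoulliMeasure

variable {α : Type*} [MeasurableSpace α] (ν : Measure α) [IsProbabilityMeasure ν]

theorem infinitePi_cylinder_eq_cylWeight [MeasurableSingletonClass α] (ω : ℕ → α) (n : ℕ) :
    Measure.infinitePi (fun _ : ℕ ↦ ν) (PiNat.cylinder ω n) =
      ENNReal.ofReal (cylWeight (fun i ↦ ν.real {i}) n ω) := by
  rw [infinitePi_cylinder, cylWeight, ENNReal.ofReal_prod_of_nonneg fun _ _ ↦ measureReal_nonneg]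
  exact Finset.prod_congr rfl fun k _ ↦ (ofReal_measureReal (s := {ω k})).symm

theorem ae_measureReal_singleton_pos [Countable α] : ∀ᵐ i ∂ν, 0 < ν.real {i} :=
  ae_iff_of_countable.2 fun _ hi ↦ ENNReal.toReal_pos hi (measure_ne_top _ _)

variable {ν}

theorem ae_forall_infinitePi {P : α → Prop} (h : ∀ᵐ i ∂ν, P i) :
    ∀ᵐ ω ∂Measure.infinitePi (fun _ : ℕ ↦ ν), ∀ k, P (ω k) :=
  ae_all_iff.2 fun k ↦
    (measurePreserving_eval_infinitePi (fun _ : ℕ ↦ ν) k).quasiMeasurePreserving.ae h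

open ProbabilityTheory in
theorem ae_tendsto_average_infinitePi {f : α → ℝ} (hfm : Measurable f)
    (hf : Integrable f ν) :
    ∀ᵐ ω ∂Measure.infinitePi (fun _ : ℕ ↦ ν),
      Tendsto (fun n : ℕ ↦ (∑ k ∈ Finset.range n, f (ω k)) / n) atTop (𝓝 (∫ i, f i ∂ν)) := by
  have heval (k : ℕ) : MeasurePreserving (fun ω : ℕ → α ↦ ω k) (Measure.infinitePi fun _ ↦ ν) ν :=
    measurePreserving_eval_infinitePi (fun _ : ℕ ↦ ν) k
  have hident (k : ℕ) : IdentDistrib (fun ω : ℕ → α ↦ f (ω k)) (fun ω ↦ f (ω 0))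
      (Measure.infinitePi fun _ ↦ ν) (Measure.infinitePi fun _ ↦ ν) :=
    IdentDistrib.comp ⟨(heval k).aemeasurable, (heval 0).aemeasurable,
      (heval k).map_eq.trans (heval 0).map_eq.symm⟩ hfm
  have hindep : iIndepFun (fun k (ω : ℕ → α) ↦ f (ω k)) (Measure.infinitePi fun _ ↦ ν) :=
    iIndepFun_infinitePi fun _ ↦ hfm
  have hmean : ∫ ω, f (ω 0) ∂Measure.infinitePi (fun _ : ℕ ↦ ν) = ∫ i, f i ∂ν := by
    conv_rhs => rw [← (heval 0).map_eq]
    exact (integral_map (heval 0).aemeasurable hfm.aestronglyMeasurable).symm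
  have hint : Integrable (fun ω : ℕ → α ↦ f (ω 0)) (Measure.infinitePi fun _ ↦ ν) :=
    (heval 0).integrable_comp_of_integrable hf
  have hlim := strong_law_ae_real (fun k (ω : ℕ → α) ↦ f (ω k)) hint
    (fun _ _ hij ↦ hindep.indepFun hij) hident
  rwa [hmean] at hlim

theorem ae_exists_forall_ge_cylWeight_le {u v : α → ℝ} (hum : Measurable u) (hvm : Measurable v)
    (hu : ∀ᵐ i ∂ν, 0 < u i) (hv : ∀ᵐ i ∂ν, 0 < v i)
    (hui : Integrable (fun i ↦ Real.log (u i)) ν) (hvi : Integrable (fun i ↦ Real.log (v i)) ν)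
    (huv : ∫ i, Real.log (u i) ∂ν < ∫ i, Real.log (v i) ∂ν) :
    ∀ᵐ ω ∂Measure.infinitePi (fun _ : ℕ ↦ ν),
      ∃ m, ∀ n ≥ m, cylWeight u n ω ≤ cylWeight v n ω := by
  have hmean : 0 < ∫ i, (Real.log (v i) - Real.log (u i)) ∂ν := by
    rw [integral_sub hvi hui]
    exact sub_pos.2 huv
  filter_upwards [ae_forall_infinitePi hu, ae_forall_infinitePi hv,
    ae_tendsto_average_infinitePi (hvm.log.sub hum.log) (hvi.sub hui)] with ω huω hvω hlim
  refine eventually_atTop.1 ?_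
  filter_upwards [hlim.eventually (lt_mem_nhds hmean), eventually_gt_atTop 0] with n hn hn0
  have hsum : 0 < ∑ k ∈ Finset.range n, (Real.log (v (ω k)) - Real.log (u (ω k))) :=
    (div_pos_iff_of_pos_right (Nat.cast_pos.2 hn0)).1 hn
  rw [Finset.sum_sub_distrib, ← Real.log_prod fun k _ ↦ (hvω k).ne',
    ← Real.log_prod fun k _ ↦ (huω k).ne', sub_pos] at hsum
  exact (Real.log_lt_log_iff (Finset.prod_pos fun k _ ↦ huω k)
    (Finset.prod_pos fun k _ ↦ hvω k)).1 hsum |>.le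

end BernoulliMeasure

section Intervals

variable {α : Type*} [LinearOrder α] [LocallyFiniteOrderBot α] {q : α → ℝ}

/-- The left endpoint of the interval of the digit `i` when intervals of lengths `q j` are laid
out from `0` in the order of their digits. -/
def digitOffset (q : α → ℝ) (i : α) : ℝ :=
  ∑ j ∈ Finset.Iio i, q j

/-- The left endpoint of the interval of the `Q`-representation coded by the first `n` digits of
`ω`, which is also the `n`-th partial sum of the series of the coding map. -/
def leftEndpoint (q : α → ℝ) (n : ℕ) (ω : ℕ → α) : ℝ :=
  ∑ k ∈ Finset.range n, digitOffset q (ω k) * cylWeight q k ω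

/-- The interval of the `Q`-representation coded by the first `n` digits of `ω`. -/
def cylInterval (q : α → ℝ) (n : ℕ) (ω : ℕ → α) : Set ℝ :=
  Icc (leftEndpoint q n ω) (leftEndpoint q n ω + cylWeight q n ω)

/-- The coding map of the `Q`-representation over a linearly ordered digit set, of which
`codingMapC` is the instance with digits `0 < ⋯ < s`. -/
noncomputable def codingMap (q : α → ℝ) (ω : ℕ → α) : ℝ :=
  ∑' k, digitOffset q (ω k) * cylWeight q k ω

theorem codingMapC_eq_codingMap (s : ℕ) (q : Fin (s + 1) → ℝ) : codingMapC s q = codingMap q := by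
  funext ω
  simp only [codingMapC, codingMap, digitOffset, cylWeight, Fin.val_fin_lt, ← Finset.sum_filter,
    Finset.filter_gt_eq_Iio]

theorem digitOffset_nonneg (hq : ∀ i, 0 ≤ q i) (i : α) : 0 ≤ digitOffset q i :=
  Finset.sum_nonneg fun j _ ↦ hq j

theorem digitOffset_add_le_digitOffset (hq : ∀ i, 0 ≤ q i) {i j : α} (hij : i < j) :
    digitOffset q i + q i ≤ digitOffset q j := by
  rw [digitOffset, Finset.sum_Iio_add_eq_sum_Iic]
  exact Finset.sum_le_sum_of_subset_of_nonneg
    (fun k hk ↦ Finset.mem_Iio.2 ((Finset.mem_Iic.1 hk).trans_lt hij)) fun k _ _ ↦ hq k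

theorem digitOffset_add_le_sum [Fintype α] (hq : ∀ i, 0 ≤ q i) (i : α) :
    digitOffset q i + q i ≤ ∑ j, q j := by
  rw [digitOffset, Finset.sum_Iio_add_eq_sum_Iic]
  exact Finset.sum_le_sum_of_subset_of_nonneg (Finset.subset_univ _) fun k _ _ ↦ hq k

theorem leftEndpoint_succ (q : α → ℝ) (n : ℕ) (ω : ℕ → α) :
    leftEndpoint q (n + 1) ω = leftEndpoint q n ω + digitOffset q (ω n) * cylWeight q n ω :=
  Finset.sum_range_succ _ _

theorem leftEndpoint_congr (q : α → ℝ) {n : ℕ} {ω ω' : ℕ → α} (h : ω' ∈ PiNat.cylinder ω n) :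
    leftEndpoint q n ω' = leftEndpoint q n ω :=
  Finset.sum_congr rfl fun k hk ↦ by
    have hkn := Finset.mem_range.1 hk
    rw [h k hkn, cylWeight_congr q (PiNat.cylinder_anti ω hkn.le h)]

theorem cylInterval_congr (q : α → ℝ) {n : ℕ} {ω ω' : ℕ → α} (h : ω' ∈ PiNat.cylinder ω n) :
    cylInterval q n ω' = cylInterval q n ω := by
  rw [cylInterval, leftEndpoint_congr q h, cylWeight_congr q h, cylInterval]

theorem interior_cylInterval (q : α → ℝ) (n : ℕ) (ω : ℕ → α) :
    interior (cylInterval q n ω) =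
      Ioo (leftEndpoint q n ω) (leftEndpoint q n ω + cylWeight q n ω) :=
  interior_Icc

theorem volume_interior_cylInterval (q : α → ℝ) (n : ℕ) (ω : ℕ → α) :
    volume (interior (cylInterval q n ω)) = ENNReal.ofReal (cylWeight q n ω) := by
  rw [interior_cylInterval, Real.volume_Ioo, add_sub_cancel_left]

theorem ediam_cylInterval (q : α → ℝ) (n : ℕ) (ω : ℕ → α) :
    Metric.ediam (cylInterval q n ω) = ENNReal.ofReal (cylWeight q n ω) := by
  rw [cylInterval, Real.ediam_Icc, add_sub_cancel_left]

theorem antitone_cylInterval [Fintype α] (hq : ∀ i, 0 < q i) (hqsum : ∑ i, q i ≤ 1)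
    (ω : ℕ → α) : Antitone fun n ↦ cylInterval q n ω :=
  antitone_nat_of_succ_le fun n ↦ by
    have hW := (cylWeight_pos hq n ω).le
    have hleft := mul_nonneg (digitOffset_nonneg (fun i ↦ (hq i).le) (ω n)) hW
    have hright := mul_le_mul_of_nonneg_right
      ((digitOffset_add_le_sum (fun i ↦ (hq i).le) (ω n)).trans hqsum) hW
    refine Icc_subset_Icc ?_ ?_ <;> rw [leftEndpoint_succ]
    · linarith
    · rw [cylWeight_succ]
      linarith

theorem disjoint_interior_cylInterval [Fintype α] (hq : ∀ i, 0 < q i) (hqsum : ∑ i, q i ≤ 1)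
    {ω ω' : ℕ → α} (hne : ω ≠ ω') {n m : ℕ} (hn : PiNat.firstDiff ω ω' < n)
    (hm : PiNat.firstDiff ω ω' < m) :
    Disjoint (interior (cylInterval q n ω)) (interior (cylInterval q m ω')) := by
  wlog hlt : ω (PiNat.firstDiff ω ω') < ω' (PiNat.firstDiff ω ω') generalizing ω ω' n m
  · rw [PiNat.firstDiff_comm] at hn hm hlt
    exact (this hne.symm hm hn
      ((not_lt.1 hlt).lt_of_ne (PiNat.apply_firstDiff_ne hne.symm))).symm
  set k := PiNat.firstDiff ω ω'
  have hcommon : ω ∈ PiNat.cylinder ω' k := PiNat.mem_cylinder_firstDiff ω ω'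
  have hends : leftEndpoint q (k + 1) ω + cylWeight q (k + 1) ω ≤ leftEndpoint q (k + 1) ω' := by
    rw [leftEndpoint_succ, leftEndpoint_succ, cylWeight_succ, leftEndpoint_congr q hcommon,
      cylWeight_congr q hcommon]
    have := mul_le_mul_of_nonneg_right (digitOffset_add_le_digitOffset (fun i ↦ (hq i).le) hlt)
      (cylWeight_pos hq k ω').le
    linarith
  refine Disjoint.mono (interior_mono (antitone_cylInterval hq hqsum ω hn))
    (interior_mono (antitone_cylInterval hq hqsum ω' hm)) ?_
  rw [interior_cylInterval, interior_cylInterval]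
  exact Set.disjoint_left.2 fun x hx hx' ↦ absurd (hx.2.trans_le hends) hx'.1.not_gt

end Intervals

section CodingMap

variable {α : Type*} [Fintype α] [LinearOrder α] [LocallyFiniteOrderBot α] {q : α → ℝ}

theorem tendsto_leftEndpoint (hq : ∀ i, 0 < q i) (hqsum : ∑ i, q i ≤ 1) (ω : ℕ → α) :
    Tendsto (fun n ↦ leftEndpoint q n ω) atTop (𝓝 (codingMap q ω)) := by
  have hterm (k : ℕ) : 0 ≤ digitOffset q (ω k) * cylWeight q k ω :=
    mul_nonneg (digitOffset_nonneg (fun i ↦ (hq i).le) _) (cylWeight_pos hq k ω).le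
  refine (summable_of_sum_range_le (c := 1) hterm fun n ↦ ?_).hasSum.tendsto_sum_nat
  have hmem : leftEndpoint q n ω ∈ cylInterval q 0 ω :=
    antitone_cylInterval hq hqsum ω n.zero_le
      (left_mem_Icc.2 (le_add_of_nonneg_right (cylWeight_pos hq n ω).le))
  simpa only [cylInterval, leftEndpoint, Finset.sum_range_zero, cylWeight_zero, zero_add]
    using hmem.2

theorem codingMap_mem_cylInterval (hq : ∀ i, 0 < q i) (hqsum : ∑ i, q i ≤ 1) (n : ℕ)
    (ω : ℕ → α) : codingMap q ω ∈ cylInterval q n ω := by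
  refine isClosed_Icc.mem_of_tendsto (tendsto_leftEndpoint hq hqsum ω) ?_
  filter_upwards [eventually_ge_atTop n] with m hm
  exact antitone_cylInterval hq hqsum ω hm
    (left_mem_Icc.2 (le_add_of_nonneg_right (cylWeight_pos hq m ω).le))

theorem image_codingMap_cylinder_subset (hq : ∀ i, 0 < q i) (hqsum : ∑ i, q i ≤ 1) (n : ℕ)
    (ω : ℕ → α) : codingMap q '' PiNat.cylinder ω n ⊆ cylInterval q n ω := by
  rintro _ ⟨x, hx, rfl⟩
  exact cylInterval_congr q hx ▸ codingMap_mem_cylInterval hq hqsum n x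

theorem ediam_image_codingMap_cylinder_le (hq : ∀ i, 0 < q i) (hqsum : ∑ i, q i ≤ 1) (n : ℕ)
    (ω : ℕ → α) :
    Metric.ediam (codingMap q '' PiNat.cylinder ω n) ≤ ENNReal.ofReal (cylWeight q n ω) :=
  (Metric.ediam_mono (image_codingMap_cylinder_subset hq hqsum n ω)).trans_eq
    (ediam_cylInterval q n ω)

theorem continuous_codingMap [TopologicalSpace α] [DiscreteTopology α] (hq : ∀ i, 0 < q i)
    (hq1 : ∀ i, q i < 1) (hqsum : ∑ i, q i ≤ 1) : Continuous (codingMap q) := by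
  rw [Metric.continuous_iff']
  intro ω ε hε
  have : Nonempty α := ⟨ω 0⟩
  obtain ⟨b, -, hb1, hb⟩ := exists_forall_cylWeight_le_pow (fun i ↦ (hq i).le) hq1
  obtain ⟨n, hn⟩ := exists_pow_lt_of_lt_one hε hb1
  filter_upwards [(PiNat.isOpen_cylinder _ ω n).mem_nhds (PiNat.self_mem_cylinder ω n)] with x hx
  have hxω := Real.dist_le_of_mem_Icc
    (image_codingMap_cylinder_subset hq hqsum n ω (mem_image_of_mem _ hx))
    (codingMap_mem_cylInterval hq hqsum n ω)
  rw [add_sub_cancel_left] at hxω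
  exact hxω.trans_lt ((hb n ω).trans_lt hn)

end CodingMap

section ExitTime

variable {α : Type*} {q : α → ℝ} {r : ℝ}

/-- The first `n` for which the interval coded by the first `n` digits of `ω` has length at most
`r`. The cylinders stopped at this time play the role of the intervals of length about `r`. It is
encoded as an infimum of natural numbers, hence is `0` if there is no such `n`. -/
noncomputable def exitTime (q : α → ℝ) (r : ℝ) (ω : ℕ → α) : ℕ :=
  sInf {n | cylWeight q n ω ≤ r}

theorem cylWeight_exitTime_le [Finite α] (hq0 : ∀ i, 0 ≤ q i) (hq1 : ∀ i, q i < 1) (hr : 0 < r)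
    (ω : ℕ → α) : cylWeight q (exitTime q r ω) ω ≤ r := by
  have : Nonempty α := ⟨ω 0⟩
  obtain ⟨b, -, hb1, hb⟩ := exists_forall_cylWeight_le_pow hq0 hq1
  obtain ⟨n, hn⟩ := exists_pow_lt_of_lt_one hr hb1
  exact Nat.sInf_mem (s := {n | cylWeight q n ω ≤ r}) ⟨n, (hb n ω).trans hn.le⟩

theorem lt_cylWeight_of_lt_exitTime {ω : ℕ → α} {n : ℕ} (hn : n < exitTime q r ω) :
    r < cylWeight q n ω :=
  not_le.1 (Nat.notMem_of_lt_sInf hn)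

theorem mul_lt_cylWeight_exitTime [Finite α] (hq1 : ∀ i, q i < 1) {a : ℝ} (ha : 0 < a)
    (haq : ∀ i, a ≤ q i) (hr : 0 < r) (hr1 : r < 1) (ω : ℕ → α) :
    a * r < cylWeight q (exitTime q r ω) ω := by
  have hq0 (i : α) : 0 ≤ q i := ha.le.trans (haq i)
  cases hN : exitTime q r ω with
  | zero =>
    have := cylWeight_exitTime_le hq0 hq1 hr ω
    rw [hN, cylWeight_zero] at this
    exact absurd hr1 this.not_gt
  | succ N =>
    have hlt : r < cylWeight q N ω := lt_cylWeight_of_lt_exitTime (hN ▸ N.lt_succ_self)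
    rw [cylWeight_succ, mul_comm a]
    exact mul_lt_mul hlt (haq _) ha (hr.trans hlt).le

theorem le_exitTime [Finite α] (hq1 : ∀ i, q i < 1) {a : ℝ} (ha : 0 < a) (haq : ∀ i, a ≤ q i)
    (hr : 0 < r) {m : ℕ} (hm : r < a ^ m) (ω : ℕ → α) : m ≤ exitTime q r ω := by
  by_contra! hlt
  have ha1 : a ≤ 1 := (haq (ω 0)).trans (hq1 _).le
  refine hm.not_ge ?_
  calc a ^ m ≤ a ^ exitTime q r ω := pow_le_pow_of_le_one ha.le ha1 hlt.le
    _ ≤ cylWeight q (exitTime q r ω) ω := pow_le_cylWeight ha.le haq _ ω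
    _ ≤ r := cylWeight_exitTime_le (fun i ↦ ha.le.trans (haq i)) hq1 hr ω

theorem exitTime_congr [Finite α] (hq0 : ∀ i, 0 ≤ q i) (hq1 : ∀ i, q i < 1) (hr : 0 < r)
    {ω ω' : ℕ → α} (h : ω' ∈ PiNat.cylinder ω (exitTime q r ω)) :
    exitTime q r ω' = exitTime q r ω := by
  refine le_antisymm (Nat.sInf_le ?_) (le_of_not_gt fun hlt ↦ ?_)
  · exact (cylWeight_congr q h).trans_le (cylWeight_exitTime_le hq0 hq1 hr ω)
  · have := cylWeight_exitTime_le hq0 hq1 hr ω'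
    rw [cylWeight_congr q (PiNat.cylinder_anti ω hlt.le h)] at this
    exact this.not_gt (lt_cylWeight_of_lt_exitTime hlt)

theorem firstDiff_lt_exitTime [Finite α] (hq0 : ∀ i, 0 ≤ q i) (hq1 : ∀ i, q i < 1) (hr : 0 < r)
    {ω ω' : ℕ → α}
    (hne : PiNat.cylinder ω (exitTime q r ω) ≠ PiNat.cylinder ω' (exitTime q r ω')) :
    PiNat.firstDiff ω ω' < exitTime q r ω := by
  by_contra! hle
  have hmem : ω' ∈ PiNat.cylinder ω (exitTime q r ω) := by
    rw [PiNat.mem_cylinder_comm]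
    exact PiNat.cylinder_anti ω' hle (PiNat.mem_cylinder_firstDiff ω ω')
  rw [exitTime_congr hq0 hq1 hr hmem] at hne
  exact hne (PiNat.mem_cylinder_iff_eq.1 hmem).symm

theorem exists_exitTime_cover [Fintype α] [LinearOrder α] [LocallyFiniteOrderBot α]
    (hq : ∀ i, 0 < q i) (hq1 : ∀ i, q i < 1) (hqsum : ∑ i, q i ≤ 1) (hr : 0 < r)
    (X : Set (ℕ → α)) :
    ∃ T ⊆ X, T.Countable ∧ X ⊆ ⋃ ω ∈ T, PiNat.cylinder ω (exitTime q r ω) ∧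
      T.PairwiseDisjoint fun ω ↦ interior (cylInterval q (exitTime q r ω) ω) := by
  have hq0 (i : α) : 0 ≤ q i := (hq i).le
  obtain ⟨T, hTX, hT⟩ := Set.SurjOn.exists_bijOn_subset
    (surjOn_image (fun ω ↦ PiNat.cylinder ω (exitTime q r ω)) X)
  have hdisj : T.PairwiseDisjoint fun ω ↦ interior (cylInterval q (exitTime q r ω) ω) := by
    intro ω hω ω' hω' hne
    have hcyl := hT.injOn.ne hω hω' hne
    refine disjoint_interior_cylInterval hq hqsum hne
      (firstDiff_lt_exitTime hq0 hq1 hr hcyl) ?_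
    rw [PiNat.firstDiff_comm]
    exact firstDiff_lt_exitTime hq0 hq1 hr hcyl.symm
  refine ⟨T, hTX, hdisj.countable_of_isOpen (fun _ _ ↦ isOpen_interior) fun ω _ ↦ ?_,
    fun x hx ↦ ?_, hdisj⟩
  · rw [interior_cylInterval]
    exact nonempty_Ioo.2 (lt_add_of_pos_right _ (cylWeight_pos hq _ ω))
  · obtain ⟨ω, hω, hωx⟩ := hT.surjOn (mem_image_of_mem _ hx)
    exact mem_iUnion₂.2 ⟨ω, hω, hωx.superset (PiNat.self_mem_cylinder x _)⟩

end ExitTime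

section BallEstimate

variable {α : Type*} [Fintype α] [LinearOrder α] [LocallyFiniteOrderBot α] {q : α → ℝ}

theorem cylInterval_exitTime_subset_closedBall (hq : ∀ i, 0 < q i) (hq1 : ∀ i, q i < 1)
    (hqsum : ∑ i, q i ≤ 1) {r : ℝ} (hr : 0 < r) {x : ℝ} {ω : ℕ → α}
    (hω : codingMap q ω ∈ Metric.closedBall x r) :
    cylInterval q (exitTime q r ω) ω ⊆ Metric.closedBall x (2 * r) := by
  intro y hy
  have hyω := Real.dist_le_of_mem_Icc hy (codingMap_mem_cylInterval hq hqsum (exitTime q r ω) ω)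
  rw [add_sub_cancel_left] at hyω
  calc dist y x ≤ dist y (codingMap q ω) + dist (codingMap q ω) x := dist_triangle _ _ _
    _ ≤ r + r :=
      add_le_add (hyω.trans (cylWeight_exitTime_le (fun i ↦ (hq i).le) hq1 hr ω)) hω
    _ = 2 * r := (two_mul r).symm

theorem measure_biUnion_le_mul_of_pairwiseDisjoint {ι X Y : Type*} [MeasurableSpace X]
    [MeasurableSpace Y] {μ : Measure X} {ν : Measure Y} {K : ℝ≥0∞} {T : Set ι} (hT : T.Countable)
    {A : ι → Set X} {J : ι → Set Y} {U : Set Y} (hJ : ∀ i ∈ T, MeasurableSet (J i))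
    (hdisj : T.PairwiseDisjoint J) (hJU : ∀ i ∈ T, J i ⊆ U)
    (hAJ : ∀ i ∈ T, μ (A i) ≤ K * ν (J i)) : μ (⋃ i ∈ T, A i) ≤ K * ν U :=
  calc μ (⋃ i ∈ T, A i) ≤ ∑' i : T, μ (A i) := measure_biUnion_le μ hT A
    _ ≤ ∑' i : T, K * ν (J i) := ENNReal.tsum_le_tsum fun i ↦ hAJ i i.2
    _ = K * ν (⋃ i ∈ T, J i) := by rw [ENNReal.tsum_mul_left, measure_biUnion hT hdisj hJ]
    _ ≤ K * ν U := mul_le_mul_right (measure_mono (iUnion₂_subset hJU)) K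

/-- The exit cylinders meeting a ball of radius `r` code intervals of length comparable to `r` with
disjoint interiors inside the concentric ball of radius `2 r`, so comparing the mass of each with
the Lebesgue measure of its interval bounds their total mass. -/
theorem measure_preimage_codingMap_closedBall_inter_le (hq : ∀ i, 0 < q i) (hq1 : ∀ i, q i < 1)
    (hqsum : ∑ i, q i ≤ 1) [MeasurableSpace α] {μ : Measure (ℕ → α)} {B : Set (ℕ → α)} {t : ℝ}
    (ht : 0 ≤ t) {m : ℕ}
    (hB : ∀ ω ∈ B, ∀ n ≥ m, μ (PiNat.cylinder ω n) ≤ ENNReal.ofReal (cylWeight q n ω ^ t))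
    {a : ℝ} (ha : 0 < a) (haq : ∀ i, a ≤ q i) (x : ℝ) {r : ℝ} (hr : r ∈ Ioo 0 (a ^ m)) :
    μ (codingMap q ⁻¹' Metric.closedBall x r ∩ B) ≤
      ENNReal.ofReal (4 / a) * ENNReal.ofReal (r ^ t) := by
  obtain ⟨hr0, hrm⟩ := hr
  obtain ⟨T, hTX, hTc, hcover, hdisj⟩ := exists_exitTime_cover hq hq1 hqsum hr0
    (codingMap q ⁻¹' Metric.closedBall x r ∩ B)
  have hC (ω) (hω : ω ∈ T) : μ (PiNat.cylinder ω (exitTime q r ω)) ≤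
      ENNReal.ofReal (r ^ t / (a * r)) * volume (interior (cylInterval q (exitTime q r ω) ω)) := by
    have hr1 : r < 1 := hrm.trans_le (pow_le_one₀ ha.le ((haq (ω 0)).trans (hq1 _).le))
    have hW := cylWeight_pos hq (exitTime q r ω) ω
    have hWr := cylWeight_exitTime_le (fun i ↦ (hq i).le) hq1 hr0 ω
    rw [volume_interior_cylInterval, ← ENNReal.ofReal_mul (by positivity)]
    refine (hB ω (hTX hω).2 _ (le_exitTime hq1 ha haq hr0 hrm ω)).trans
      (ENNReal.ofReal_le_ofReal ?_)
    calc cylWeight q (exitTime q r ω) ω ^ t ≤ r ^ t := Real.rpow_le_rpow hW.le hWr ht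
      _ = r ^ t / (a * r) * (a * r) := (div_mul_cancel₀ _ (mul_pos ha hr0).ne').symm
      _ ≤ r ^ t / (a * r) * cylWeight q (exitTime q r ω) ω :=
        mul_le_mul_of_nonneg_left (mul_lt_cylWeight_exitTime hq1 ha haq hr0 hr1 ω).le
          (by positivity)
  refine (measure_mono hcover).trans <| (measure_biUnion_le_mul_of_pairwiseDisjoint hTc
    (fun _ _ ↦ isOpen_interior.measurableSet) hdisj (fun ω hω ↦ interior_subset.trans
      (cylInterval_exitTime_subset_closedBall hq hq1 hqsum hr0 (hTX hω).1)) hC).trans_eq ?_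
  rw [Real.volume_closedBall, ← ENNReal.ofReal_mul (by positivity),
    ← ENNReal.ofReal_mul (by positivity)]
  congr 1
  field_simp
  ring

end BallEstimate

section IntegralLog

variable {α : Type*} [MeasurableSpace α] {ν : Measure α} {q : α → ℝ}

theorem integral_log_rpow (hq : ∀ i, 0 < q i) (t : ℝ) :
    ∫ i, Real.log (q i ^ t) ∂ν = t * ∫ i, Real.log (q i) ∂ν := by
  simp only [Real.log_rpow (hq _), integral_const_mul]

theorem integral_log_neg [NeZero ν] (hq : ∀ i, 0 < q i) (hq1 : ∀ i, q i < 1)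
    (hint : Integrable (fun i ↦ Real.log (q i)) ν) : ∫ i, Real.log (q i) ∂ν < 0 := by
  have hneg (i : α) : Real.log (q i) < 0 := Real.log_neg (hq i) (hq1 i)
  rw [← neg_pos, ← integral_neg,
    integral_pos_iff_support_of_nonneg (fun i ↦ neg_nonneg.2 (hneg i).le) hint.neg,
    Function.support_eq_univ fun i ↦ neg_ne_zero.2 (hneg i).ne]
  exact NeZero.pos (ν univ)

end IntegralLog

section Dimension

variable {α : Type*} [Fintype α] [LinearOrder α] [LocallyFiniteOrderBot α] [MeasurableSpace α]
  [MeasurableSingletonClass α] {q : α → ℝ}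

theorem measurable_codingMap (hq : ∀ i, 0 < q i) (hq1 : ∀ i, q i < 1) (hqsum : ∑ i, q i ≤ 1) :
    Measurable (codingMap q) := by
  let _ : TopologicalSpace α := ⊥
  have : DiscreteTopology α := ⟨rfl⟩
  exact (continuous_codingMap hq hq1 hqsum).measurable

theorem hausdorffMeasure_ne_zero_of_cylinder_le (hq : ∀ i, 0 < q i) (hq1 : ∀ i, q i < 1)
    (hqsum : ∑ i, q i ≤ 1) {μ : Measure (ℕ → α)} {B : Set (ℕ → α)} {t : ℝ} (ht : 0 ≤ t) {m : ℕ}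
    (hB : ∀ ω ∈ B, ∀ n ≥ m, μ (PiNat.cylinder ω n) ≤ ENNReal.ofReal (cylWeight q n ω ^ t))
    {E : Set ℝ} (hE : μ (codingMap q ⁻¹' E ∩ B) ≠ 0) : μH[t] E ≠ 0 := by
  obtain ⟨ω, -⟩ := nonempty_of_measure_ne_zero hE
  have : Nonempty α := ⟨ω 0⟩
  obtain ⟨i, hi⟩ := Finite.exists_min q
  have hK := div_pos four_pos (hq i)
  have hπ := measurable_codingMap hq hq1 hqsum
  intro hzero
  refine hE (le_antisymm ?_ zero_le)
  calc μ (codingMap q ⁻¹' E ∩ B) ≤ μ.restrict B (codingMap q ⁻¹' E) := Measure.le_restrict_apply _ _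
    _ ≤ (μ.restrict B).map (codingMap q) E := Measure.le_map_apply hπ.aemeasurable E
    _ ≤ ENNReal.ofReal (4 / q i) * μH[t] E := by
      refine le_mul_hausdorffMeasure (ENNReal.ofReal_pos.2 hK).ne' ENNReal.ofReal_ne_top ht
        (pow_pos (hq i) m) (fun x r hr ↦ ?_) E
      rw [Measure.map_apply hπ Metric.isClosed_closedBall.measurableSet,
        Measure.restrict_apply (hπ Metric.isClosed_closedBall.measurableSet)]
      exact measure_preimage_codingMap_closedBall_inter_le hq hq1 hqsum ht hB (hq i) hi x hr
    _ = 0 := by rw [hzero, mul_zero]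

theorem hausdorffMeasure_image_codingMap_le (hq : ∀ i, 0 < q i) (hq1 : ∀ i, q i < 1)
    (hqsum : ∑ i, q i ≤ 1) {μ : Measure (ℕ → α)} {B : Set (ℕ → α)} {t : ℝ} (ht : 0 ≤ t) {m : ℕ}
    (hB : ∀ ω ∈ B, ∀ n ≥ m, ENNReal.ofReal (cylWeight q n ω ^ t) ≤ μ (PiNat.cylinder ω n)) :
    μH[t] (codingMap q '' B) ≤ μ univ := by
  obtain rfl | ⟨ω, -⟩ := B.eq_empty_or_nonempty
  · simp only [image_empty, measure_empty, zero_le]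
  have : Nonempty α := ⟨ω 0⟩
  obtain ⟨b, hb0, hb1, hb⟩ := exists_forall_cylWeight_le_pow (fun i ↦ (hq i).le) hq1
  have hdiam := ediam_image_codingMap_cylinder_le hq hqsum
  have hδ : Tendsto (fun n ↦ ENNReal.ofReal (b ^ n)) atTop (𝓝 0) := by
    simpa only [ENNReal.ofReal_zero] using
      ENNReal.tendsto_ofReal (tendsto_pow_atTop_nhds_zero_of_lt_one hb0 hb1)
  refine hausdorffMeasure_image_le hδ (.of_forall fun n ω _ ↦ ?_) ?_
  · exact (hdiam n ω).trans (ENNReal.ofReal_le_ofReal (hb n ω))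
  · filter_upwards [eventually_ge_atTop m] with n hn ω hω
    calc Metric.ediam (codingMap q '' PiNat.cylinder ω n) ^ t
        ≤ ENNReal.ofReal (cylWeight q n ω) ^ t := ENNReal.rpow_le_rpow (hdiam n ω) ht
      _ = ENNReal.ofReal (cylWeight q n ω ^ t) :=
        ENNReal.ofReal_rpow_of_nonneg (cylWeight_pos hq n ω).le ht
      _ ≤ μ (PiNat.cylinder ω n) := hB ω hω n hn

variable {ν : Measure α} [IsProbabilityMeasure ν]

theorem le_dimH_of_integral_log_lt (hq : ∀ i, 0 < q i) (hq1 : ∀ i, q i < 1)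
    (hqsum : ∑ i, q i ≤ 1) {t : ℝ≥0}
    (ht : ∫ i, Real.log (ν.real {i}) ∂ν < t * ∫ i, Real.log (q i) ∂ν) {E : Set ℝ}
    (hE : Measure.infinitePi (fun _ : ℕ ↦ ν) (codingMap q ⁻¹' E) ≠ 0) : t ≤ dimH E := by
  let B (m : ℕ) : Set (ℕ → α) :=
    {ω | ∀ n ≥ m, cylWeight (fun i ↦ ν.real {i}) n ω ≤ cylWeight (fun i ↦ q i ^ (t : ℝ)) n ω}
  have hae : ∀ᵐ ω ∂Measure.infinitePi (fun _ : ℕ ↦ ν), ω ∈ ⋃ m, B m := by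
    rw [← integral_log_rpow hq] at ht
    simp only [mem_iUnion]
    exact ae_exists_forall_ge_cylWeight_le (measurable_of_finite _) (measurable_of_finite _)
      (ae_measureReal_singleton_pos ν) (.of_forall fun i ↦ Real.rpow_pos_of_pos (hq i) _)
      .of_finite .of_finite ht
  obtain ⟨m, hm⟩ : ∃ m, Measure.infinitePi (fun _ : ℕ ↦ ν) (codingMap q ⁻¹' E ∩ B m) ≠ 0 := by
    by_contra! hnull
    rw [← measure_iUnion_null_iff, ← inter_iUnion] at hnull
    exact hE ((measure_inter_conull (t := ⋃ m, B m) hae).symm.trans hnull)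
  refine le_dimH_of_hausdorffMeasure_ne_zero
    (hausdorffMeasure_ne_zero_of_cylinder_le hq hq1 hqsum t.2 (m := m) (fun ω hω n hn ↦ ?_) hm)
  rw [infinitePi_cylinder_eq_cylWeight, ← cylWeight_rpow fun i ↦ (hq i).le]
  exact ENNReal.ofReal_le_ofReal (hω n hn)

theorem exists_dimH_le_of_lt_integral_log (hq : ∀ i, 0 < q i) (hq1 : ∀ i, q i < 1)
    (hqsum : ∑ i, q i ≤ 1) {t : ℝ≥0}
    (ht : t * ∫ i, Real.log (q i) ∂ν < ∫ i, Real.log (ν.real {i}) ∂ν) :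
    ∃ E, MeasurableSet E ∧ (Measure.infinitePi fun _ : ℕ ↦ ν).map (codingMap q) E = 1 ∧
      dimH E ≤ t := by
  let _ : TopologicalSpace α := ⊥
  have : DiscreteTopology α := ⟨rfl⟩
  let B (m : ℕ) : Set (ℕ → α) :=
    {ω | ∀ n ≥ m, cylWeight (fun i ↦ q i ^ (t : ℝ)) n ω ≤ cylWeight (fun i ↦ ν.real {i}) n ω}
  have hae : ∀ᵐ ω ∂Measure.infinitePi (fun _ : ℕ ↦ ν), ∃ m, ω ∈ B m := by
    rw [← integral_log_rpow hq] at ht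
    exact ae_exists_forall_ge_cylWeight_le (measurable_of_finite _) (measurable_of_finite _)
      (.of_forall fun i ↦ Real.rpow_pos_of_pos (hq i) _) (ae_measureReal_singleton_pos ν)
      .of_finite .of_finite ht
  have hE : MeasurableSet (⋃ m, codingMap q '' B m) := .iUnion fun m ↦
    ((isClosed_forall_ge_cylWeight_le _ _ m).isCompact.image
      (continuous_codingMap hq hq1 hqsum)).measurableSet
  refine ⟨_, hE, ?_, ?_⟩
  · have hπ := measurable_codingMap hq hq1 hqsum
    rw [Measure.map_apply hπ hE, ← mem_ae_iff_prob_eq_one (hπ hE)]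
    filter_upwards [hae] with ω ⟨m, hω⟩
    exact mem_iUnion.2 ⟨m, mem_image_of_mem _ hω⟩
  · rw [dimH_iUnion]
    refine iSup_le fun m ↦ dimH_le_of_hausdorffMeasure_ne_top <| ne_top_of_le_ne_top
      (measure_ne_top (Measure.infinitePi fun _ : ℕ ↦ ν) univ) <|
      hausdorffMeasure_image_codingMap_le hq hq1 hqsum t.2 (m := m) fun ω hω n hn ↦ ?_
    rw [infinitePi_cylinder_eq_cylWeight, ← cylWeight_rpow fun i ↦ (hq i).le]
    exact ENNReal.ofReal_le_ofReal (hω n hn)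

theorem iInf_dimH_map_codingMap (hq : ∀ i, 0 < q i) (hq1 : ∀ i, q i < 1)
    (hqsum : ∑ i, q i ≤ 1) :
    (⨅ (E : Set ℝ) (_ : MeasurableSet E ∧
      (Measure.infinitePi fun _ : ℕ ↦ ν).map (codingMap q) E = 1), dimH E) =
      ENNReal.ofReal ((∫ i, Real.log (ν.real {i}) ∂ν) / ∫ i, Real.log (q i) ∂ν) := by
  have hlog : ∫ i, Real.log (q i) ∂ν < 0 := integral_log_neg hq hq1 .of_finite
  refine le_antisymm (le_of_forall_gt_imp_ge_of_dense fun s hs ↦ ?_)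
    (le_iInf₂ fun E hE ↦ ENNReal.le_of_forall_nnreal_lt fun t ht ↦ ?_)
  · obtain ⟨t, ht, hts⟩ := ENNReal.lt_iff_exists_nnreal_btwn.1 hs
    have ht' := (Real.le_coe_toNNReal _).trans_lt (NNReal.coe_lt_coe.2 (ENNReal.coe_lt_coe.1 ht))
    obtain ⟨E, hE, hE1, hEt⟩ :=
      exists_dimH_le_of_lt_integral_log hq hq1 hqsum ((div_lt_iff_of_neg hlog).1 ht')
    exact (iInf₂_le E ⟨hE, hE1⟩).trans (hEt.trans hts.le)
  · have ht' := (lt_div_iff_of_neg hlog).1 (ENNReal.coe_lt_ofReal.1 ht)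
    refine le_dimH_of_integral_log_lt hq hq1 hqsum ht' ?_
    rw [← Measure.map_apply (measurable_codingMap hq hq1 hqsum) hE.1, hE.2]
    exact one_ne_zero

end Dimension

theorem lt_one_of_sum_le_one {ι : Type*} [Fintype ι] [Nontrivial ι] {q : ι → ℝ}
    (hq : ∀ i, 0 < q i) (hqsum : ∑ i, q i ≤ 1) (i : ι) : q i < 1 := by
  obtain ⟨j, hji⟩ := exists_ne i
  exact (Finset.single_lt_sum hji (Finset.mem_univ i) (Finset.mem_univ j) (hq j)
    fun k _ _ ↦ (hq k).le).trans_le hqsum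

end QRepresentation

open QRepresentation in
theorem dimH_of_measure_general {α : Type*} [Fintype α] [LinearOrder α] [LocallyFiniteOrderBot α]
    [MeasurableSpace α] [MeasurableSingletonClass α] {p q : α → ℝ} (hq : ∀ i, 0 < q i)
    (hq1 : ∀ i, q i < 1) (hqsum : ∑ i, q i ≤ 1) (hp : ∀ i, 0 ≤ p i) {μ : Measure (ℕ → α)}
    [IsProbabilityMeasure μ]
    (hμ : ∀ n ω, μ (PiNat.cylinder ω n) = ENNReal.ofReal (∏ k ∈ Finset.range n, p (ω k))) :
    (⨅ (E : Set ℝ) (_ : MeasurableSet E ∧ μ.map (codingMap q) E = 1), dimH E) =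
      ENNReal.ofReal ((∑ i, p i * Real.log (p i)) / (∑ i, p i * Real.log (q i))) := by
  obtain ⟨ν, _, hν, rfl⟩ := exists_eq_infinitePi_of_cylinder hp hμ
  have hsum (f : α → ℝ) : ∑ i, p i * f i = ∫ i, f i ∂ν := by
    simp only [integral_fintype Integrable.of_finite, hν, smul_eq_mul]
  rw [hsum, hsum]
  simp only [← hν]
  exact iInf_dimH_map_codingMap hq hq1 hqsum

/-- Theorem 4 (dimension formula): for the random variable `ξ` with i.i.d.
`Q`-digits, `P(ξ_k = i) = p_i`, in the `Q`-representation with constant ratios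
`q_i`, the Hausdorff dimension of the distribution `μ_ξ` — the infimum of the
Hausdorff dimensions of Borel sets of full `μ_ξ`-measure — equals
`(∑ p_i ln p_i) / (∑ p_i ln q_i)` (with `0 · ln 0 = 0`; note `Real.log 0 = 0`). -/
theorem dimH_of_measure (s : ℕ) (hs : 1 ≤ s) (p q : Fin (s + 1) → ℝ)
    (hq : ∀ i, 0 < q i) (hqsum : ∑ i, q i = 1)
    (hp : ∀ i, 0 ≤ p i) (hpsum : ∑ i, p i = 1)
    (μ : Measure (ℕ → Fin (s + 1))) [IsProbabilityMeasure μ]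
    (hμ : ∀ (n : ℕ) (ω : ℕ → Fin (s + 1)),
      μ {x | ∀ k < n, x k = ω k} = ENNReal.ofReal (∏ k ∈ Finset.range n, p (ω k)))
    (μξ : Measure ℝ) (hμξ : μξ = Measure.map (codingMapC s q) μ) :
    (⨅ (E : Set ℝ) (_ : MeasurableSet E ∧ μξ E = 1), dimH E) =
      ENNReal.ofReal ((∑ i, p i * Real.log (p i)) / (∑ i, p i * Real.log (q i))) := by
  have : Nontrivial (Fin (s + 1)) := Fin.nontrivial_iff_two_le.2 (Nat.succ_le_succ hs)
  rw [hμξ, QRepresentation.codingMapC_eq_codingMap]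
  exact dimH_of_measure_general hq
    (QRepresentation.lt_one_of_sum_le_one hq hqsum.le) hqsum.le hp hμ
end
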